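/- (Propagation of chaos under parametrized joint policies.) Let 𝒳, 𝒰, 𝒳⁰, 𝒰⁰ be compact metric spaces, with p, p⁰, r Lipschitz and equi-Lipschitz policy classes. Let Ξ be a compact parameter space, Γ : Ξ → (decision rules 𝒳 → 𝒫(𝒰)) an L_Γ-Lipschitz map into L_Π-Lipschitz decision rules, and let the joint parametrized policy π̃^θ(u⁰, ξ | x⁰, μ), its log-gradient ∇_θ log π̃^θ (or gradient ∇_θ π̃^θ), all be Lipschitz and uniformly bounded. Consider the N-agent system where at each step (u_t^{0,N}, ξ_t^N) ∼ π̃^θ(·|x_t^{0,N}, μ_t^N), each minor action u_t^{i,N} ∼ Γ(ξ_t^N)(·|x_t^{i,N}), and transitions follow p, p⁰; and the limiting system where (u⁰_t, ξ_t) ∼ π̃^θ(·|x⁰_t, μ_t) and μ_{t+1} = T(x⁰_t, u⁰_t, μ_t, μ_t ⊗ Γ(ξ_t)). Then for any equi-Lipschitz family ℱ of functions on 𝒳⁰ × 𝒰⁰ × 𝒫(𝒳) and every t ∈ ℕ, uniformly over f ∈ ℱ and policy parameters: | E[ f(x_t^{0,N}, u_t^{0,N}, μ_t^N) − f(x⁰_t,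 u⁰_t, μ_t) ] | → 0 as N → ∞. -/

import Mathlib

open MeasureTheory

noncomputable instance {X : Type*} [MeasurableSpace X] : MeasurableSpace (ProbabilityMeasure X) :=
  inferInstanceAs (MeasurableSpace {μ : Measure X // IsProbabilityMeasure μ})

/-- `W₁` distance on probability measures, via Kantorovich duality. -/
noncomputable def W1 {X : Type*} [MeasurableSpace X] [PseudoMetricSpace X]
    (μ ν : ProbabilityMeasure X) : ℝ :=
  ⨆ f : {f : X → ℝ // LipschitzWith 1 f},
    |∫ x, (f : X → ℝ) x ∂(μ : Measure X) - ∫ x, (f : X → ℝ) x ∂(ν : Measure X)|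

/-- Empirical measure of `N` points (an arbitrary probability measure if `N = 0`). -/
noncomputable def emp {X : Type*} [MeasurableSpace X] [Nonempty X] (N : ℕ) (x : Fin N → X) :
    ProbabilityMeasure X := by
  classical
  exact if hN : N = 0 then ⟨Measure.dirac (Classical.arbitrary X), inferInstance⟩
  else ⟨(N : ENNReal)⁻¹ • ∑ i : Fin N, Measure.dirac (x i), by
    constructor
    simp only [Measure.smul_apply, Measure.coe_finset_sum, Finset.sum_apply,
      Measure.dirac_apply' _ MeasurableSet.univ, smul_eq_mul]
    simp only [Set.indicator_univ, Pi.one_apply, Finset.sum_const, Finset.card_univ,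
      Fintype.card_fin, nsmul_eq_mul, mul_one]
    exact ENNReal.inv_mul_cancel (by exact_mod_cast hN) (by simp)⟩

/-- Law of `(x⁰_t, (u⁰_t, ξ_t), (x^{i,N}_t)_i)` in the `N`-agent M3FC system under the
parametrized joint policy `π̃^θ` and decision-rule map `Γ`, started from the initial law `ι`:
at each step the joint action `(u⁰,ξ)` is sampled from `π̃^θ(·|x⁰,μ^N)`, each minor agent
samples its action from `Γ(ξ)(·|xⁱ)`, and states transition through `p`, `p⁰`. -/
noncomputable def pLawNFrom {X U X0 U0 Xi Θ : Type*} [MeasurableSpace X] [Nonempty X]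
    [MeasurableSpace U] [MeasurableSpace X0] [MeasurableSpace U0] [MeasurableSpace Xi]
    (p : X → U → X0 → U0 → ProbabilityMeasure X → ProbabilityMeasure X)
    (p0 : X0 → U0 → ProbabilityMeasure X → ProbabilityMeasure X0)
    (Γ : Xi → X → ProbabilityMeasure U)
    (pit : Θ → X0 → ProbabilityMeasure X → ProbabilityMeasure (U0 × Xi))
    (θ : Θ) (N : ℕ) (ι : Measure (X0 × (U0 × Xi) × (Fin N → X))) :
    ℕ → Measure (X0 × (U0 × Xi) × (Fin N → X))
  | 0 => ι
  | t + 1 => (pLawNFrom p p0 Γ pit θ N ι t).bind fun s =>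
      (((p0 s.1 s.2.1.1 (emp N s.2.2) : Measure X0)).prod
        (Measure.pi fun i => ((Γ s.2.1.2 (s.2.2 i) : Measure U)).bind
          fun u => (p (s.2.2 i) u s.1 s.2.1.1 (emp N s.2.2) : Measure X))).bind
        fun y => ((pit θ y.1 (emp N y.2) : Measure (U0 × Xi))).map fun a => (y.1, a, y.2)

/-- Law of `(x⁰_t, (u⁰_t, ξ_t), μ_t)` in the limiting M3FC process under the parametrized
joint policy `π̃^θ`, where `TG x⁰ u⁰ ξ μ` is the deterministic mean field transition
`T(x⁰,u⁰,μ, μ ⊗ Γ(ξ))`, started from the initial law `ι`. -/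
noncomputable def pLimLawFrom {X U0 X0 Xi Θ : Type*} [MeasurableSpace X]
    [MeasurableSpace X0] [MeasurableSpace U0] [MeasurableSpace Xi]
    (p0 : X0 → U0 → ProbabilityMeasure X → ProbabilityMeasure X0)
    (pit : Θ → X0 → ProbabilityMeasure X → ProbabilityMeasure (U0 × Xi))
    (TG : X0 → U0 → Xi → ProbabilityMeasure X → ProbabilityMeasure X)
    (θ : Θ) (ι : Measure (X0 × (U0 × Xi) × ProbabilityMeasure X)) :
    ℕ → Measure (X0 × (U0 × Xi) × ProbabilityMeasure X)
  | 0 => ι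
  | t + 1 => (pLimLawFrom p0 pit TG θ ι t).bind fun s =>
      ((p0 s.1 s.2.1.1 s.2.2 : Measure X0)).bind fun y0 =>
        ((pit θ y0 (TG s.1 s.2.1.1 s.2.1.2 s.2.2) : Measure (U0 × Xi))).map
          fun a => (y0, a, TG s.1 s.2.1.1 s.2.1.2 s.2.2)

section Helpers

set_option linter.unusedSectionVars false

open ProbabilityTheory Filter Topology

lemma aux_integral_bind {A B : Type*} [MeasurableSpace A] [MeasurableSpace B]
    (m : Measure A) [IsProbabilityMeasure m] (k : A → Measure B) (hk : Measurable k)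
    (hk1 : ∀ a, IsProbabilityMeasure (k a)) (g : B → ℝ) (hg : Measurable g) (C : ℝ)
    (hC : ∀ b, |g b| ≤ C) :
    IsProbabilityMeasure (m.bind k) ∧ ∫ b, g b ∂(m.bind k) = ∫ a, ∫ b, g b ∂(k a) ∂m := by
  have h1 : IsProbabilityMeasure (m.bind k) := by
    constructor
    rw [Measure.bind_apply MeasurableSet.univ hk.aemeasurable]
    simp
  refine ⟨h1, ?_⟩
  let κ : Kernel A B := ⟨k, hk⟩
  have h2 := Kernel.integral_comp (κ := Kernel.const Unit m) (η := κ) (a := ()) (f := g)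
    (by
      rw [Kernel.comp_apply]
      exact Integrable.of_bound (μ := m.bind k) hg.aestronglyMeasurable C
        (Eventually.of_forall hC))
  rw [Kernel.comp_apply] at h2
  exact h2

lemma aux_meas_map {A B C : Type*} [MeasurableSpace A] [MeasurableSpace B] [MeasurableSpace C]
    (k : A → Measure B) (hk : Measurable k) (hk1 : ∀ a, IsProbabilityMeasure (k a))
    (G : A → B → C) (hG : Measurable (Function.uncurry G)) :
    Measurable fun a => (k a).map (G a) := by
  let κ : Kernel A B := ⟨k, hk⟩
  have : IsMarkovKernel κ := ⟨hk1⟩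
  refine Measure.measurable_of_measurable_coe _ fun s hs => ?_
  have : ∀ a, (k a).map (G a) s = κ a (Prod.mk a ⁻¹' (Function.uncurry G ⁻¹' s)) := by
    intro a
    have h1 : Measurable (G a) := hG.comp measurable_prodMk_left
    rw [Measure.map_apply h1 hs]
    rfl
  simp_rw [this]
  exact Kernel.measurable_kernel_prodMk_left (hG hs)

lemma aux_meas_bind {A B C : Type*} [MeasurableSpace A] [MeasurableSpace B] [MeasurableSpace C]
    (k : A → Measure B) (hk : Measurable k) (hk1 : ∀ a, IsProbabilityMeasure (k a))
    (G : A → B → Measure C) (hG : Measurable (Function.uncurry G)) :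
    Measurable fun a => (k a).bind (G a) := by
  let κ : Kernel A B := ⟨k, hk⟩
  have : IsMarkovKernel κ := ⟨hk1⟩
  refine Measure.measurable_of_measurable_coe _ fun s hs => ?_
  have : ∀ a, (k a).bind (G a) s = ∫⁻ b, G a b s ∂(κ a) := by
    intro a
    have h1 : Measurable (G a) := hG.comp measurable_prodMk_left
    rw [Measure.bind_apply hs h1.aemeasurable]
    rfl
  simp_rw [this]
  apply Measurable.lintegral_kernel_prod_right
  exact (Measure.measurable_coe hs).comp hG

lemma aux_meas_pi {A B : Type*} [MeasurableSpace A] [MeasurableSpace B] {N : ℕ}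
    (k : Fin N → A → Measure B) (hk : ∀ i, Measurable (k i))
    (hk1 : ∀ i a, IsProbabilityMeasure (k i a)) :
    Measurable fun a => Measure.pi fun i => k i a := by
  refine Measurable.measure_of_isPiSystem_of_isProbabilityMeasure generateFrom_pi.symm
    isPiSystem_pi ?_
  rintro _ ⟨s, hs, rfl⟩
  simp_rw [Measure.pi_pi]
  refine Finset.measurable_prod _ fun i _ => ?_
  exact (Measure.measurable_coe (hs i (Set.mem_univ _))).comp (hk i)

lemma aux_meas_prod {A B C : Type*} [MeasurableSpace A] [MeasurableSpace B] [MeasurableSpace C]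
    (k : A → Measure B) (hk : Measurable k) (hk1 : ∀ a, IsProbabilityMeasure (k a))
    (l : A → Measure C) (hl : Measurable l) (hl1 : ∀ a, IsProbabilityMeasure (l a)) :
    Measurable fun a => (k a).prod (l a) := by
  refine Measurable.measure_of_isPiSystem_of_isProbabilityMeasure generateFrom_prod.symm
    isPiSystem_prod ?_
  rintro _ ⟨s, hs, t, ht, rfl⟩
  simp_rw [Measure.prod_prod]
  exact ((Measure.measurable_coe hs).comp hk).mul ((Measure.measurable_coe ht).comp hl)

/-- A family of probability measures is measurable when integrals of Lipschitz functions are. -/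
lemma aux_meas_of_lip {A Y : Type*} [MeasurableSpace A] [MetricSpace Y] [MeasurableSpace Y]
    [BorelSpace Y] (k : A → Measure Y) (hk1 : ∀ a, IsProbabilityMeasure (k a))
    (h : ∀ (K : NNReal) (f : Y → ℝ), LipschitzWith K f → Measurable fun a => ∫ y, f y ∂(k a)) :
    Measurable k := by
  refine Measurable.measure_of_isPiSystem_of_isProbabilityMeasure
    (S := {s | IsClosed s}) ?_ isPiSystem_isClosed ?_
  · rw [BorelSpace.measurable_eq (α := Y)]; exact borel_eq_generateFrom_isClosed
  intro F hF
  have hδ : ∀ n : ℕ, (0 : ℝ) < 1 / ((n : ℝ) + 1) := fun n => by positivity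
  have h1 : Measurable fun a => (k a).real F := by
    refine measurable_of_tendsto_metrizable (f := fun n a =>
      ∫ y, (thickenedIndicator (hδ n) F y : ℝ) ∂(k a)) (fun n => ?_) ?_
    · exact h _ _ (lipschitzWith_iff_dist_le_mul.2 fun x y =>
        (lipschitzWith_thickenedIndicator (hδ n) F).dist_le_mul x y)
    · rw [tendsto_pi_nhds]
      intro a
      exact tendsto_integral_thickenedIndicator_of_isClosed (k a) hF hδ
        tendsto_one_div_add_atTop_nhds_zero_nat
  have : ∀ a, k a F = ENNReal.ofReal ((k a).real F) := fun a => by simp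
  simp_rw [this]
  exact h1.ennreal_ofReal

/-- Scaling: a bound for all `1`-Lipschitz functions gives one for `K`-Lipschitz functions. -/
lemma aux_scale {X : Type*} [MetricSpace X] [MeasurableSpace X] (m m' : Measure X) (C : ℝ) (h : ∀ f : X → ℝ, LipschitzWith 1 f →
    |∫ x, f x ∂m - ∫ x, f x ∂m'| ≤ C) (K : ℝ) (hK : 0 < K) (f : X → ℝ)
    (hf : ∀ x y, |f x - f y| ≤ K * dist x y) :
    |∫ x, f x ∂m - ∫ x, f x ∂m'| ≤ K * C := by
  have := h (fun x => K⁻¹ * f x) (LipschitzWith.of_dist_le_mul fun x y => by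
    rw [Real.dist_eq, ← mul_sub, abs_mul, abs_of_pos (inv_pos.2 hK)]
    simp only [NNReal.coe_one, one_mul]
    rw [inv_mul_le_iff₀ hK]
    exact hf x y)
  rw [integral_const_mul, integral_const_mul, ← mul_sub, abs_mul, abs_of_pos (inv_pos.2 hK),
    inv_mul_le_iff₀ hK] at this
  exact this

section W
variable {X : Type*} [MetricSpace X] [CompactSpace X] [MeasurableSpace X] [BorelSpace X]

lemma aux_lip_int {K : NNReal} {f : X → ℝ} (hf : LipschitzWith K f) (μ : Measure X)
    [IsProbabilityMeasure μ] : Integrable f μ :=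
  hf.continuous.integrable_of_hasCompactSupport (HasCompactSupport.of_compactSpace f)

/-- change of integrand and of measure -/
lemma aux_diff {Y : Type*} [MeasurableSpace Y] (μ : Measure Y) [IsProbabilityMeasure μ]
    (f g : Y → ℝ) (hf : Integrable f μ) (hg : Integrable g μ) (C : ℝ)
    (h : ∀ y, |f y - g y| ≤ C) : |∫ y, f y ∂μ - ∫ y, g y ∂μ| ≤ C := by
  rw [← integral_sub hf hg]
  have := norm_integral_le_of_norm_le_const (μ := μ) (f := fun y => f y - g y)
    (Eventually.of_forall h)
  simpa using this

lemma aux_W_bound (μ ν : ProbabilityMeasure X) (f : X → ℝ) (hf : LipschitzWith 1 f) :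
    |∫ x, f x ∂(μ : Measure X) - ∫ x, f x ∂(ν : Measure X)| ≤ 2 * Metric.diam (Set.univ : Set X) := by
  obtain ⟨x0⟩ : Nonempty X := by
    have := (μ : Measure X).nonempty_of_neZero; exact this
  have key : ∀ ρ : ProbabilityMeasure X, |∫ x, f x ∂(ρ : Measure X) - f x0|
      ≤ Metric.diam (Set.univ : Set X) := by
    intro ρ
    have := aux_diff (ρ : Measure X) f (fun _ => f x0) (aux_lip_int hf _) (integrable_const _)
      (Metric.diam (Set.univ : Set X)) (fun y => by
        have h1 := hf.dist_le_mul y x0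
        have h2 := Metric.dist_le_diam_of_mem (isCompact_univ (X := X)).isBounded
          (Set.mem_univ y) (Set.mem_univ x0)
        rw [Real.dist_eq] at h1
        simp at h1
        linarith)
    simpa using this
  have h1 := abs_le.1 (key μ)
  have h2 := abs_le.1 (key ν)
  rw [abs_le]; constructor <;> linarith

lemma aux_W_bdd (μ ν : ProbabilityMeasure X) : BddAbove (Set.range
    fun f : {f : X → ℝ // LipschitzWith 1 f} =>
    |∫ x, (f : X → ℝ) x ∂(μ : Measure X) - ∫ x, (f : X → ℝ) x ∂(ν : Measure X)|) := by
  refine ⟨2 * Metric.diam (Set.univ : Set X), ?_⟩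
  rintro _ ⟨f, rfl⟩
  exact aux_W_bound μ ν f f.2

lemma aux_le_W (μ ν : ProbabilityMeasure X) (f : X → ℝ) (hf : LipschitzWith 1 f) :
    |∫ x, f x ∂(μ : Measure X) - ∫ x, f x ∂(ν : Measure X)| ≤ W1 μ ν :=
  le_ciSup (aux_W_bdd μ ν) ⟨f, hf⟩

lemma aux_W_le (μ ν : ProbabilityMeasure X) (C : ℝ) (h : ∀ f : X → ℝ, LipschitzWith 1 f →
    |∫ x, f x ∂(μ : Measure X) - ∫ x, f x ∂(ν : Measure X)| ≤ C) : W1 μ ν ≤ C := by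
  have : Nonempty {f : X → ℝ // LipschitzWith 1 f} :=
    ⟨⟨fun _ => 0, (LipschitzWith.const 0).weaken zero_le_one⟩⟩
  exact ciSup_le fun f => h f f.2

lemma aux_W_nonneg (μ ν : ProbabilityMeasure X) : 0 ≤ W1 μ ν :=
  (abs_nonneg _).trans (aux_le_W μ ν (fun _ => 0) ((LipschitzWith.const 0).weaken zero_le_one))

lemma aux_W_le_diam (μ ν : ProbabilityMeasure X) :
    W1 μ ν ≤ 2 * Metric.diam (Set.univ : Set X) :=
  aux_W_le μ ν _ (aux_W_bound μ ν)

/-- Finite nets of the space of `1`-Lipschitz functions modulo constants. -/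
lemma aux_net [Nonempty X] (η : ℝ) (hη : 0 < η) : ∃ T : Finset (X → ℝ),
    (∀ g ∈ T, LipschitzWith 1 g) ∧ ∀ f : X → ℝ, LipschitzWith 1 f → ∃ g ∈ T, ∃ c : ℝ,
      ∀ x, |f x - (g x + c)| ≤ η := by
  classical
  obtain ⟨x0⟩ := ‹Nonempty X›
  let A : Set (BoundedContinuousFunction X ℝ) :=
    {f | LipschitzWith 1 f ∧ f x0 = 0}
  have hA : IsCompact (closure A) := by
    refine BoundedContinuousFunction.arzela_ascoli
      (Metric.closedBall (0 : ℝ) (Metric.diam (Set.univ : Set X)))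
      (isCompact_closedBall _ _) A ?_ ?_
    · intro f x hf
      have h1 := hf.1.dist_le_mul x x0
      have h2 := Metric.dist_le_diam_of_mem (isCompact_univ (X := X)).isBounded
          (Set.mem_univ x) (Set.mem_univ x0)
      rw [hf.2] at h1
      simp only [NNReal.coe_one, one_mul] at h1
      exact Metric.mem_closedBall.2 (h1.trans h2)
    · exact (LipschitzWith.uniformEquicontinuous _ 1 (fun f => f.2.1)).equicontinuous
  have hT := (hA.totallyBounded.subset subset_closure)
  obtain ⟨t, htA, htf, ht⟩ := Metric.finite_approx_of_totallyBounded hT η hη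
  refine ⟨htf.toFinset.image (fun f : BoundedContinuousFunction X ℝ => (f : X → ℝ)), ?_, ?_⟩
  · intro g hg
    simp only [Finset.mem_image, Set.Finite.mem_toFinset] at hg
    obtain ⟨f, hf, rfl⟩ := hg
    exact (htA hf).1
  · intro f hf
    let F : BoundedContinuousFunction X ℝ :=
      BoundedContinuousFunction.mkOfCompact ⟨fun x => f x - f x0, by
        have := hf.continuous; fun_prop⟩
    have hF : F ∈ A := ⟨LipschitzWith.of_dist_le_mul fun x y => by
        have := hf.dist_le_mul x y
        simpa [F, Real.dist_eq] using this, by simp [F]⟩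
    have h3 := ht hF
    simp only [Set.mem_iUnion, Metric.mem_ball] at h3
    obtain ⟨g, hg, hd⟩ := h3
    refine ⟨g, by simp only [Finset.mem_image, Set.Finite.mem_toFinset]; exact ⟨g, hg, rfl⟩,
      f x0, fun x => ?_⟩
    have h4 := (BoundedContinuousFunction.dist_coe_le_dist (f := F) (g := g) x).trans hd.le
    rw [Real.dist_eq] at h4
    simp only [F, BoundedContinuousFunction.mkOfCompact_apply, ContinuousMap.coe_mk] at h4
    rw [show f x - (g x + f x0) = f x - f x0 - g x by ring]
    exact h4

lemma aux_net_diff (μ ν : ProbabilityMeasure X) (f g : X → ℝ) (hf : LipschitzWith 1 f)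
    (hg : LipschitzWith 1 g) (c η : ℝ) (h : ∀ x, |f x - (g x + c)| ≤ η) :
    |∫ x, f x ∂(μ : Measure X) - ∫ x, f x ∂(ν : Measure X)| ≤
      2 * η + |∫ x, g x ∂(μ : Measure X) - ∫ x, g x ∂(ν : Measure X)| := by
  have key : ∀ ρ : ProbabilityMeasure X,
      |∫ x, f x ∂(ρ : Measure X) - (∫ x, g x ∂(ρ : Measure X) + c)| ≤ η := by
    intro ρ
    have := aux_diff (ρ : Measure X) f (fun x => g x + c) (aux_lip_int hf _)
      ((aux_lip_int hg _).add (integrable_const c)) η h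
    rw [integral_add (aux_lip_int hg _) (integrable_const c)] at this
    simpa using this
  have h1 := abs_le.1 (key μ)
  have h2 := abs_le.1 (key ν)
  have h3 := le_abs_self (∫ x, g x ∂(μ : Measure X) - ∫ x, g x ∂(ν : Measure X))
  have h4 := neg_abs_le (∫ x, g x ∂(μ : Measure X) - ∫ x, g x ∂(ν : Measure X))
  rw [abs_le]; constructor <;> linarith

lemma aux_net_W [Nonempty X] (η : ℝ) (hη : 0 < η) : ∃ T : Finset (X → ℝ),
    (∀ g ∈ T, LipschitzWith 1 g) ∧ ∀ μ ν : ProbabilityMeasure X, W1 μ ν ≤ η +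
      ∑ g ∈ T, |∫ x, g x ∂(μ : Measure X) - ∫ x, g x ∂(ν : Measure X)| := by
  obtain ⟨T, hT, h⟩ := aux_net (X := X) (η / 2) (by positivity)
  refine ⟨T, hT, fun μ ν => aux_W_le _ _ _ fun f hf => ?_⟩
  obtain ⟨g, hg, c, hc⟩ := h f hf
  have h1 := aux_net_diff μ ν f g hf (hT g hg) c _ hc
  have h2 := Finset.single_le_sum (f := fun g : X → ℝ =>
    |∫ x, g x ∂(μ : Measure X) - ∫ x, g x ∂(ν : Measure X)|) (fun i _ => abs_nonneg _) hg
  linarith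

lemma aux_meas_integral {f : X → ℝ} (hf : LipschitzWith 1 f) :
    Measurable fun μ : ProbabilityMeasure X => ∫ x, f x ∂(μ : Measure X) := by
  let κ : Kernel (ProbabilityMeasure X) X := ⟨fun μ => (μ : Measure X), measurable_subtype_coe⟩
  have : IsMarkovKernel κ := ⟨fun μ => by change IsProbabilityMeasure (μ : Measure X); infer_instance⟩
  have h := StronglyMeasurable.integral_kernel_prod_right (κ := κ) (f := fun _ x => f x)
    ((hf.continuous.measurable.comp measurable_snd).stronglyMeasurable)
  exact h.measurable

lemma aux_meas_W [Nonempty X] (ν : ProbabilityMeasure X) :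
    Measurable fun μ : ProbabilityMeasure X => W1 μ ν := by
  choose T hT h using fun n : ℕ => aux_net (X := X) (1 / ((n : ℝ) + 1)) (by positivity)
  refine measurable_of_Ioi fun c => ?_
  have : (fun μ : ProbabilityMeasure X => W1 μ ν) ⁻¹' Set.Ioi c = ⋃ n : ℕ, ⋃ g ∈ T n,
      {μ : ProbabilityMeasure X |
        c < |∫ x, g x ∂(μ : Measure X) - ∫ x, g x ∂(ν : Measure X)|} := by
    ext μ
    simp only [Set.mem_preimage, Set.mem_Ioi, Set.mem_iUnion, Set.mem_ofPred_eq, exists_prop]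
    constructor
    · intro hc
      by_contra! hcon
      obtain ⟨n, hn⟩ := exists_nat_one_div_lt (show (0 : ℝ) < (W1 μ ν - c) / 2 by linarith)
      have : W1 μ ν ≤ 2 * (1 / ((n : ℝ) + 1)) + c := aux_W_le _ _ _ fun f hf => by
        obtain ⟨g, hg, c', hc'⟩ := h n f hf
        have h1 := aux_net_diff μ ν f g hf (hT n g hg) c' _ hc'
        linarith [hcon n g hg]
      linarith
    · rintro ⟨n, g, hg, hc⟩
      exact hc.trans_le (aux_le_W _ _ _ (hT n g hg))
  rw [this]
  refine MeasurableSet.iUnion fun n => Finset.measurableSet_biUnion _ fun g hg => ?_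
  exact measurableSet_lt measurable_const
    (((aux_meas_integral (hT n g hg)).sub measurable_const).abs)

lemma aux_sep [Nonempty X] : ∃ D : Set (ProbabilityMeasure X), D.Countable ∧
    ∀ μ, ∀ ε > (0 : ℝ), ∃ ν ∈ D, W1 μ ν < ε := by
  choose T hT h using fun n : ℕ => aux_net_W (X := X) (1 / ((n : ℝ) + 1)) (by positivity)
  let Ψ : (n : ℕ) → ProbabilityMeasure X → (T n → ℝ) := fun n μ g => ∫ x, g.1 x ∂(μ : Measure X)
  have hD : ∀ n, ∃ D : Set (ProbabilityMeasure X), D.Countable ∧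
      ∀ μ, ∀ ε > (0 : ℝ), ∃ ν ∈ D, dist (Ψ n μ) (Ψ n ν) < ε := by
    intro n
    obtain ⟨s, hs, hd⟩ := TopologicalSpace.exists_countable_dense (Set.range (Ψ n))
    refine ⟨(fun y : Set.range (Ψ n) => y.2.choose) '' s, hs.image _, fun μ ε hε => ?_⟩
    obtain ⟨y, hy, hy2⟩ := Metric.dense_iff.1 hd ⟨Ψ n μ, μ, rfl⟩ ε hε
    refine ⟨_, ⟨y, hy2, rfl⟩, ?_⟩
    rw [y.2.choose_spec, dist_comm]
    exact hy
  choose D hDc hD using hD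
  refine ⟨⋃ n, D n, Set.countable_iUnion hDc, fun μ ε hε => ?_⟩
  obtain ⟨n, hn⟩ := exists_nat_one_div_lt (half_pos hε)
  obtain ⟨ν, hν, hd⟩ := hD n μ (ε / 2 / ((T n).card + 1)) (by positivity)
  refine ⟨ν, Set.mem_iUnion.2 ⟨n, hν⟩, ?_⟩
  have h1 := h n μ ν
  have h2 : ∑ g ∈ T n, |∫ x, g x ∂(μ : Measure X) - ∫ x, g x ∂(ν : Measure X)|
      ≤ (T n).card • (ε / 2 / ((T n).card + 1)) := by
    refine Finset.sum_le_card_nsmul _ _ _ fun g hg => ?_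
    have := dist_le_pi_dist (Ψ n μ) (Ψ n ν) ⟨g, hg⟩
    rw [Real.dist_eq] at this
    exact this.trans hd.le
  have h3 : (T n).card • (ε / 2 / ((T n).card + 1)) ≤ ε / 2 := by
    rw [nsmul_eq_mul, mul_div_assoc', div_le_iff₀ (by positivity)]
    nlinarith
  linarith

lemma aux_meas_lip [Nonempty X] {A : Type*} [PseudoMetricSpace A] [SecondCountableTopology A]
    [MeasurableSpace A] [OpensMeasurableSpace A] (g : A × ProbabilityMeasure X → ℝ) (L : ℝ)
    (hL : 0 < L) (hg : ∀ a b, |g a - g b| ≤ L * (dist a.1 b.1 + W1 a.2 b.2)) : Measurable g := by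
  obtain ⟨D, hDc, hD⟩ := aux_sep (X := X)
  obtain ⟨S, hSc, hS⟩ := TopologicalSpace.exists_countable_dense A
  refine measurable_of_Iio fun c => ?_
  have : g ⁻¹' Set.Iio c = ⋃ b ∈ S, ⋃ ν ∈ D,
      {a | g (b, ν) + L * (dist a.1 b + W1 a.2 ν) < c} := by
    ext a
    simp only [Set.mem_preimage, Set.mem_Iio, Set.mem_iUnion, Set.mem_ofPred_eq, exists_prop]
    constructor
    · intro hc
      have hpos : 0 < (c - g a) / (4 * L) := div_pos (by linarith) (by linarith)
      obtain ⟨b, hb, hbS⟩ := Metric.dense_iff.1 hS a.1 _ hpos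
      obtain ⟨ν, hν, hW⟩ := hD a.2 _ hpos
      refine ⟨b, hbS, ν, hν, ?_⟩
      rw [Metric.mem_ball, dist_comm] at hb
      have h1 := (abs_le.1 (hg a (b, ν))).1
      simp only at h1
      have h2 : L * (dist a.1 b + W1 a.2 ν) < L * (2 * ((c - g a) / (4 * L))) :=
        mul_lt_mul_of_pos_left (by linarith) hL
      have h3 : L * (2 * ((c - g a) / (4 * L))) = (c - g a) / 2 := by field_simp; ring
      linarith
    · rintro ⟨b, hb, ν, hν, hc⟩
      have h1 := (abs_le.1 (hg a (b, ν))).2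
      simp only at h1
      linarith
  rw [this]
  refine MeasurableSet.biUnion hSc fun b _ => MeasurableSet.biUnion hDc fun ν _ => ?_
  refine measurableSet_lt ?_ measurable_const
  have h1 : Measurable fun a : A × ProbabilityMeasure X => dist a.1 b :=
    ((continuous_id.dist continuous_const).measurable).comp measurable_fst
  have h2 : Measurable fun a : A × ProbabilityMeasure X => W1 a.2 ν :=
    (aux_meas_W ν).comp measurable_snd
  exact measurable_const.add (measurable_const.mul (h1.add h2))

end W

section E
variable {X : Type*} [MetricSpace X] [CompactSpace X] [MeasurableSpace X] [BorelSpace X]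
  [Nonempty X]

lemma aux_emp_int (N : ℕ) (hN : N ≠ 0) (x : Fin N → X) (f : X → ℝ) :
    ∫ y, f y ∂(emp N x : Measure X) = (N : ℝ)⁻¹ * ∑ i, f (x i) := by
  have : (emp N x : Measure X) = (N : ENNReal)⁻¹ • ∑ i : Fin N, Measure.dirac (x i) := 
    congrArg Subtype.val (dif_neg hN)
  rw [this, integral_smul_measure, integral_finsetSum_measure]
  · simp
  · intro i _
    exact integrable_dirac (by simp)

lemma aux_emp_meas (N : ℕ) : Measurable (emp (X := X) N) := by
  by_cases hN : N = 0
  · subst hN; exact Subsingleton.measurable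
  · have h : Measurable fun x : Fin N → X => (emp N x : Measure X) := by
      refine aux_meas_of_lip _ (fun a => inferInstance) fun K f hf => ?_
      simp_rw [aux_emp_int N hN]
      have := hf.continuous.measurable
      fun_prop
    exact Measurable.subtype_mk h

lemma aux_mean_dev (N : ℕ) (hN : N ≠ 0) (κ : Fin N → Measure X)
    (hκ : ∀ i, IsProbabilityMeasure (κ i)) (g : X → ℝ) (hg : LipschitzWith 1 g) (e : ℝ) (he : 0 < e)
    (hNe : (Metric.diam (Set.univ : Set X)) ^ 2 ≤ N * e ^ 2) :
    ∫ y, |(N : ℝ)⁻¹ * ∑ i, g (y i) - (N : ℝ)⁻¹ * ∑ i, ∫ x, g x ∂(κ i)| ∂(Measure.pi κ) ≤ e := by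
  set D := Metric.diam (Set.univ : Set X)
  have hNpos : (0 : ℝ) < N := by positivity
  obtain ⟨x0⟩ := ‹Nonempty X›
  have hgm := hg.continuous.measurable
  have hb : ∀ x, g x ∈ Set.Icc (g x0 - D) (g x0 + D) := by
    intro x
    have h1 := hg.dist_le_mul x x0
    have h2 := Metric.dist_le_diam_of_mem (isCompact_univ (X := X)).isBounded
          (Set.mem_univ x) (Set.mem_univ x0)
    rw [Real.dist_eq] at h1
    simp only [NNReal.coe_one, one_mul] at h1
    have := abs_le.1 (h1.trans h2)
    constructor <;> linarith [this.1, this.2]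
  have hm : ∀ i, MemLp g 2 (κ i) := fun i =>
    memLp_of_bounded (Filter.Eventually.of_forall hb) hgm.aestronglyMeasurable 2
  have hvar := variance_sum_pi (μ := κ) (X := fun _ => g) hm
  have hvar2 : ∑ i, Var[g; κ i] ≤ N * D ^ 2 := by
    have : ∀ i ∈ Finset.univ, Var[g; κ i] ≤ D ^ 2 := fun i _ => by
      have := variance_le_sq_of_bounded (μ := κ i) (Filter.Eventually.of_forall hb) hgm.aemeasurable
      refine this.trans (le_of_eq ?_)
      ring
    have := Finset.sum_le_card_nsmul _ _ _ this
    simpa using this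
  set Z : (Fin N → X) → ℝ := ∑ i, fun ω => g (ω i) with hZ
  have hZapp : ∀ y, Z y = ∑ i, g (y i) := fun y => by simp [hZ]
  have hZm : Measurable Z := by
    have : Z = fun y => ∑ i, g (y i) := funext hZapp
    rw [this]; fun_prop
  have hint : ∀ i, Integrable (fun y : Fin N → X => g (y i)) (Measure.pi κ) := fun i =>
    Integrable.of_bound (hgm.comp (measurable_pi_apply i)).aestronglyMeasurable (|g x0| + |D|) (Filter.Eventually.of_forall fun y => by
      have := hb (y i)
      rw [Real.norm_eq_abs, abs_le]
      constructor <;> linarith [this.1, this.2, neg_abs_le (g x0), le_abs_self (g x0),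
        le_abs_self D])
  have hEZ : ∫ y, Z y ∂(Measure.pi κ) = ∑ i, ∫ x, g x ∂(κ i) := by
    simp_rw [hZapp]
    rw [integral_finsetSum _ (fun i _ => hint i)]
    refine Finset.sum_congr rfl fun i _ => ?_
    exact integral_comp_eval hgm.aestronglyMeasurable
  rw [← hEZ]
  simp_rw [← hZapp]
  rw [variance_eq_integral hZm.aemeasurable] at hvar
  set c := ∫ y, Z y ∂(Measure.pi κ)
  have hZL : MemLp Z 2 (Measure.pi κ) := by
    rw [hZ]
    exact memLp_finsetSum' _ fun i _ => (hm i).comp_measurePreserving (measurePreserving_eval _ i)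
  have hsq : Integrable (fun y => (Z y - c) ^ 2) (Measure.pi κ) :=
    (hZL.sub (memLp_const c)).integrable_sq
  calc ∫ y, |(N : ℝ)⁻¹ * Z y - (N : ℝ)⁻¹ * c| ∂(Measure.pi κ)
      ≤ ∫ y, ((2 * e * N ^ 2)⁻¹ * (Z y - c) ^ 2 + e / 2) ∂(Measure.pi κ) := by
        refine integral_mono_of_nonneg (Filter.Eventually.of_forall fun y => abs_nonneg _)
          ((hsq.const_mul _).add (integrable_const _)) (Filter.Eventually.of_forall fun y => ?_)
        simp only
        rw [← mul_sub]
        set w := (N : ℝ)⁻¹ * (Z y - c)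
        have : (2 * e * N ^ 2)⁻¹ * (Z y - c) ^ 2 = (2 * e)⁻¹ * |w| ^ 2 := by
          rw [sq_abs]; simp only [w]; field_simp
        rw [this]
        have h2 : (2 * e)⁻¹ * |w| ^ 2 + e / 2 - |w| = (2 * e)⁻¹ * (|w| - e) ^ 2 := by
          field_simp; ring
        have h3 : 0 ≤ (2 * e)⁻¹ * (|w| - e) ^ 2 := by positivity
        linarith
    _ = (2 * e * N ^ 2)⁻¹ * (∫ y, (Z y - c) ^ 2 ∂(Measure.pi κ)) + e / 2 := by
        rw [integral_add (hsq.const_mul _) (integrable_const _), integral_const_mul]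
        simp
    _ ≤ (2 * e * N ^ 2)⁻¹ * (N * D ^ 2) + e / 2 := by
        gcongr
        exact hvar.le.trans hvar2
    _ ≤ (2 * e * N ^ 2)⁻¹ * (N * (N * e ^ 2)) + e / 2 := by gcongr
    _ = e := by field_simp; norm_num

lemma aux_lln (η : ℝ) (hη : 0 < η) : ∃ N0 : ℕ, ∀ N ≥ N0, N ≠ 0 ∧ ∀ κ : Fin N → Measure X,
    (∀ i, IsProbabilityMeasure (κ i)) → ∀ ν : ProbabilityMeasure X,
    (∀ f : X → ℝ, LipschitzWith 1 f →
      ∫ x, f x ∂(ν : Measure X) = (N : ℝ)⁻¹ * ∑ i, ∫ x, f x ∂(κ i)) →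
    ∫ y, W1 (emp N y) ν ∂(Measure.pi κ) ≤ η := by
  obtain ⟨T, hT, h⟩ := aux_net_W (X := X) (η / 2) (by positivity)
  set e := η / 2 / (T.card + 1) with he
  have hepos : 0 < e := by positivity
  obtain ⟨N0, hN0⟩ := exists_nat_ge ((Metric.diam (Set.univ : Set X)) ^ 2 / e ^ 2)
  refine ⟨N0 + 1, fun N hN => ⟨by omega, fun κ hκ ν hν => ?_⟩⟩
  have hN' : N ≠ 0 := by omega
  have hNe : (Metric.diam (Set.univ : Set X)) ^ 2 ≤ N * e ^ 2 := by
    rw [← div_le_iff₀ (by positivity)]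
    exact hN0.trans (by exact_mod_cast (by omega : N0 ≤ N))
  have hI : ∀ g ∈ T, Integrable (fun y : Fin N → X => |∫ x, g x ∂(emp N y : Measure X)
      - ∫ x, g x ∂(ν : Measure X)|) (Measure.pi κ) := fun g hg =>
    Integrable.of_bound (((aux_meas_integral (hT g hg)).comp (aux_emp_meas N)).sub
      measurable_const).abs.aestronglyMeasurable (2 * Metric.diam (Set.univ : Set X))
      (Filter.Eventually.of_forall fun y => by
        rw [Real.norm_eq_abs, abs_abs]
        exact aux_W_bound _ _ g (hT g hg))
  calc ∫ y, W1 (emp N y) ν ∂(Measure.pi κ)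
      ≤ ∫ y, (η / 2 + ∑ g ∈ T, |∫ x, g x ∂(emp N y : Measure X)
          - ∫ x, g x ∂(ν : Measure X)|) ∂(Measure.pi κ) :=
        integral_mono_of_nonneg (Filter.Eventually.of_forall fun y => aux_W_nonneg _ _)
          ((integrable_const _).add (integrable_finsetSum _ hI))
          (Filter.Eventually.of_forall fun y => h _ _)
    _ = η / 2 + ∑ g ∈ T, ∫ y, |∫ x, g x ∂(emp N y : Measure X)
          - ∫ x, g x ∂(ν : Measure X)| ∂(Measure.pi κ) := by
        rw [integral_add (integrable_const _) (integrable_finsetSum _ hI), integral_finsetSum _ hI]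
        simp
    _ ≤ η / 2 + T.card • e := by
        gcongr
        refine Finset.sum_le_card_nsmul _ _ _ fun g hg => ?_
        have := aux_mean_dev N hN' κ hκ g (hT g hg) e hepos hNe
        rw [hν g (hT g hg)]
        simp_rw [aux_emp_int N hN']
        exact this
    _ ≤ η := by
        have : T.card • e ≤ η / 2 := by
          rw [he, nsmul_eq_mul, mul_div_assoc', div_le_iff₀ (by positivity)]
          nlinarith
        linarith

/-- measurability of `W₁`-Lipschitz kernels -/
lemma aux_meas_kernel {A Y : Type*} [PseudoMetricSpace A] [SecondCountableTopology A]
    [MeasurableSpace A] [OpensMeasurableSpace A] [MetricSpace Y] [MeasurableSpace Y] [BorelSpace Y]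
    (k : A × ProbabilityMeasure X → Measure Y) (hk1 : ∀ a, IsProbabilityMeasure (k a)) (L : ℝ)
    (hL : 0 < L)
    (hk : ∀ a b, ∀ f : Y → ℝ, LipschitzWith 1 f → |∫ y, f y ∂(k a) - ∫ y, f y ∂(k b)|
      ≤ L * (dist a.1 b.1 + W1 a.2 b.2)) : Measurable k := by
  refine aux_meas_of_lip k hk1 fun K f hf => ?_
  have hK : (0 : ℝ) < K + 1 := by positivity
  refine aux_meas_lip _ ((K + 1) * L) (by positivity) fun a b => ?_
  rw [mul_assoc]
  refine aux_scale (k a) (k b) _ (hk a b) _ hK f fun x y => ?_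
  have := hf.dist_le_mul x y
  rw [Real.dist_eq] at this
  nlinarith [dist_nonneg (x := x) (y := y)]

end E

section M
variable {X U X0 U0 Xi : Type*}
    [MetricSpace X] [CompactSpace X] [MeasurableSpace X] [BorelSpace X] [Nonempty X]
    [MetricSpace U] [CompactSpace U] [MeasurableSpace U] [BorelSpace U]
    [MetricSpace X0] [CompactSpace X0] [MeasurableSpace X0] [BorelSpace X0]
    [MetricSpace U0] [CompactSpace U0] [MeasurableSpace U0] [BorelSpace U0]
    [MetricSpace Xi] [CompactSpace Xi] [MeasurableSpace Xi] [BorelSpace Xi]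

/-- Lipschitz functions of the limiting state. -/
def LipS (g : X0 × (U0 × Xi) × ProbabilityMeasure X → ℝ) (L : ℝ) : Prop :=
  ∀ a b, |g a - g b| ≤ L * (dist a.1 b.1 + dist a.2.1.1 b.2.1.1 + dist a.2.1.2 b.2.1.2
    + W1 a.2.2 b.2.2)

/-- Lipschitz functions of the major state and the mean field. -/
def LipH (h : X0 × ProbabilityMeasure X → ℝ) (L : ℝ) : Prop :=
  ∀ a b, |h a - h b| ≤ L * (dist a.1 b.1 + W1 a.2 b.2)

lemma LipS.meas {g : X0 × (U0 × Xi) × ProbabilityMeasure X → ℝ} {L : ℝ} (hL : 0 < L)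
    (hg : LipS g L) : Measurable g := by
  have h1 : Measurable fun a : (X0 × (U0 × Xi)) × ProbabilityMeasure X =>
      g (a.1.1, a.1.2, a.2) := by
    refine aux_meas_lip _ (3 * L) (by positivity) fun a b => ?_
    refine (hg _ _).trans ?_
    simp only
    have e1 : dist a.1.1 b.1.1 ≤ dist a.1 b.1 := le_max_left _ _
    have e2 : dist a.1.2 b.1.2 ≤ dist a.1 b.1 := le_max_right _ _
    have e3 : dist a.1.2.1 b.1.2.1 ≤ dist a.1.2 b.1.2 := le_max_left _ _
    have e4 : dist a.1.2.2 b.1.2.2 ≤ dist a.1.2 b.1.2 := le_max_right _ _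
    have e5 := aux_W_nonneg a.2 b.2
    rw [mul_comm 3 L, mul_assoc]
    refine mul_le_mul_of_nonneg_left ?_ hL.le
    linarith
  exact h1.comp (f := fun s : X0 × (U0 × Xi) × ProbabilityMeasure X => ((s.1, s.2.1), s.2.2))
    (by fun_prop)

lemma aux_dist_le {Y : Type*} [MetricSpace Y] [CompactSpace Y] (x y : Y) :
    dist x y ≤ Metric.diam (Set.univ : Set Y) :=
  Metric.dist_le_diam_of_mem (isCompact_univ (X := Y)).isBounded (Set.mem_univ x) (Set.mem_univ y)

lemma LipS.bdd {g : X0 × (U0 × Xi) × ProbabilityMeasure X → ℝ} {L : ℝ} (hL : 0 < L)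
    (hg : LipS g L) : ∃ C, ∀ s, |g s| ≤ C := by
  rcases isEmpty_or_nonempty (X0 × (U0 × Xi) × ProbabilityMeasure X) with h | ⟨⟨s0⟩⟩
  · exact ⟨0, fun s => (h.false s).elim⟩
  refine ⟨|g s0| + L * (Metric.diam (Set.univ : Set X0) + Metric.diam (Set.univ : Set U0)
    + Metric.diam (Set.univ : Set Xi) + 2 * Metric.diam (Set.univ : Set X)), fun s => ?_⟩
  have h1 := (hg s s0).trans (mul_le_mul_of_nonneg_left
    (add_le_add (add_le_add (add_le_add (aux_dist_le _ _) (aux_dist_le _ _)) (aux_dist_le _ _))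
      (aux_W_le_diam _ _)) hL.le)
  have h2 := abs_sub_abs_le_abs_sub (g s) (g s0)
  linarith

lemma LipH.meas {h : X0 × ProbabilityMeasure X → ℝ} {L : ℝ} (hL : 0 < L)
    (hh : LipH h L) : Measurable h := aux_meas_lip h L hL hh

lemma LipH.bdd {h : X0 × ProbabilityMeasure X → ℝ} {L : ℝ} (hL : 0 < L)
    (hh : LipH h L) : ∃ C, ∀ s, |h s| ≤ C := by
  rcases isEmpty_or_nonempty (X0 × ProbabilityMeasure X) with h' | ⟨⟨s0⟩⟩
  · exact ⟨0, fun s => (h'.false s).elim⟩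
  refine ⟨|h s0| + L * (Metric.diam (Set.univ : Set X0)
    + 2 * Metric.diam (Set.univ : Set X)), fun s => ?_⟩
  have h1 := (hh s s0).trans (mul_le_mul_of_nonneg_left
    (add_le_add (aux_dist_le _ _) (aux_W_le_diam _ _)) hL.le)
  have h2 := abs_sub_abs_le_abs_sub (h s) (h s0)
  linarith

lemma aux_bint {Y : Type*} [MeasurableSpace Y] (m : Measure Y) [IsProbabilityMeasure m] {f : Y → ℝ}
    (hf : Measurable f) (hb : ∃ C, ∀ y, |f y| ≤ C) : Integrable f m := by
  obtain ⟨C, hC⟩ := hb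
  exact Integrable.of_bound hf.aestronglyMeasurable C (Filter.Eventually.of_forall hC)

lemma aux_W_self (μ : ProbabilityMeasure X) : W1 μ μ = 0 :=
  le_antisymm (aux_W_le _ _ _ fun f _ => by simp) (aux_W_nonneg _ _)

lemma aux_h (pit : X0 → ProbabilityMeasure X → ProbabilityMeasure (U0 × Xi)) (Lpit : ℝ)
    (hLpit : 0 < Lpit)
    (hpit : ∀ (x0 x0' : X0) (μ μ' : ProbabilityMeasure X) (g : U0 × Xi → ℝ),
      (∀ a b : U0 × Xi, |g a - g b| ≤ dist a.1 b.1 + dist a.2 b.2) →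
      |∫ a, g a ∂(pit x0 μ : Measure (U0 × Xi)) - ∫ a, g a ∂(pit x0' μ' : Measure (U0 × Xi))|
        ≤ Lpit * (dist x0 x0' + W1 μ μ'))
    (g : X0 × (U0 × Xi) × ProbabilityMeasure X → ℝ) (L : ℝ) (hL : 0 < L) (hg : LipS g L) :
    LipH (fun y => ∫ a, g (y.1, a, y.2) ∂(pit y.1 y.2 : Measure (U0 × Xi))) (L * (1 + Lpit)) := by
  intro y z
  have hm := hg.meas hL
  have hI : ∀ (y : X0 × ProbabilityMeasure X) (m : Measure (U0 × Xi)) [IsProbabilityMeasure m],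
      Integrable (fun a => g (y.1, a, y.2)) m := fun y m _ =>
    aux_bint m (hm.comp (by fun_prop)) (by
      obtain ⟨C, hC⟩ := hg.bdd hL
      exact ⟨C, fun a => hC _⟩)
  have h1 := aux_diff (pit y.1 y.2 : Measure (U0 × Xi)) (fun a => g (y.1, a, y.2))
    (fun a => g (z.1, a, z.2)) (hI y _) (hI z _) (L * (dist y.1 z.1 + W1 y.2 z.2)) (fun a => by
      have := hg (y.1, a, y.2) (z.1, a, z.2)
      simpa using this)
  have h2 := hpit y.1 z.1 y.2 z.2 (fun a => L⁻¹ * g (z.1, a, z.2)) (fun a b => by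
    rw [← mul_sub, abs_mul, abs_of_pos (inv_pos.2 hL), inv_mul_le_iff₀ hL]
    have := hg (z.1, a, z.2) (z.1, b, z.2)
    simpa [aux_W_self] using this)
  rw [integral_const_mul, integral_const_mul, ← mul_sub, abs_mul, abs_of_pos (inv_pos.2 hL),
    inv_mul_le_iff₀ hL] at h2
  have h3 := abs_sub_le (∫ a, g (y.1, a, y.2) ∂(pit y.1 y.2 : Measure (U0 × Xi)))
    (∫ a, g (z.1, a, z.2) ∂(pit y.1 y.2 : Measure (U0 × Xi)))
    (∫ a, g (z.1, a, z.2) ∂(pit z.1 z.2 : Measure (U0 × Xi)))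
  calc _ ≤ _ := h3
    _ ≤ _ := add_le_add h1 h2
    _ = _ := by ring

lemma aux_P (p0 : X0 → U0 → ProbabilityMeasure X → ProbabilityMeasure X0) (Lp0 : ℝ) (hLp0 : 0 < Lp0)
    (hp0 : ∀ (x0 x0' : X0) (u0 u0' : U0) (μ μ' : ProbabilityMeasure X) (f : X0 → ℝ),
        LipschitzWith 1 f →
      |∫ y, f y ∂(p0 x0 u0 μ : Measure X0) - ∫ y, f y ∂(p0 x0' u0' μ' : Measure X0)|
        ≤ Lp0 * (dist x0 x0' + dist u0 u0' + W1 μ μ'))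
    (TG : X0 → U0 → Xi → ProbabilityMeasure X → ProbabilityMeasure X) (LT : ℝ) (hLT : 0 < LT)
    (hT : ∀ (x0 x0' : X0) (u0 u0' : U0) (ξ ξ' : Xi) (μ μ' : ProbabilityMeasure X),
      W1 (TG x0 u0 ξ μ) (TG x0' u0' ξ' μ') ≤
        LT * (dist x0 x0' + dist u0 u0' + dist ξ ξ' + W1 μ μ'))
    (h : X0 × ProbabilityMeasure X → ℝ) (L : ℝ) (hL : 0 < L) (hh : LipH h L) :
    LipS (fun s : X0 × (U0 × Xi) × ProbabilityMeasure X =>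
      ∫ y0, h (y0, TG s.1 s.2.1.1 s.2.1.2 s.2.2) ∂(p0 s.1 s.2.1.1 s.2.2 : Measure X0))
      (L * (LT + Lp0)) := by
  intro s z
  have hm := hh.meas hL
  have hI : ∀ (ν : ProbabilityMeasure X) (m : Measure X0) [IsProbabilityMeasure m],
      Integrable (fun y => h (y, ν)) m := fun y m _ =>
    aux_bint m (hm.comp (by fun_prop)) (by
      obtain ⟨C, hC⟩ := hh.bdd hL
      exact ⟨C, fun a => hC _⟩)
  simp only
  set νs := TG s.1 s.2.1.1 s.2.1.2 s.2.2
  set νz := TG z.1 z.2.1.1 z.2.1.2 z.2.2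
  set d := dist s.1 z.1 + dist s.2.1.1 z.2.1.1 + dist s.2.1.2 z.2.1.2 + W1 s.2.2 z.2.2
  have hW : W1 νs νz ≤ LT * d := hT _ _ _ _ _ _ _ _
  have h1 := aux_diff (p0 s.1 s.2.1.1 s.2.2 : Measure X0) (fun y => h (y, νs))
    (fun y => h (y, νz)) (hI _ _) (hI _ _) (L * (LT * d)) (fun a => by
      have := hh (a, νs) (a, νz)
      simp only [dist_self, zero_add] at this
      exact this.trans (mul_le_mul_of_nonneg_left hW hL.le))
  have h2 := aux_scale _ _ _ (hp0 s.1 z.1 s.2.1.1 z.2.1.1 s.2.2 z.2.2) L hL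
    (fun y => h (y, νz)) (fun x y => by
      have := hh (x, νz) (y, νz)
      simpa [aux_W_self] using this)
  have h4 : Lp0 * (dist s.1 z.1 + dist s.2.1.1 z.2.1.1 + W1 s.2.2 z.2.2) ≤ Lp0 * d := by
    refine mul_le_mul_of_nonneg_left ?_ hLp0.le
    have := dist_nonneg (x := s.2.1.2) (y := z.2.1.2)
    simp only [d]; linarith
  have h3 := abs_sub_le (∫ y, h (y, νs) ∂(p0 s.1 s.2.1.1 s.2.2 : Measure X0))
    (∫ y, h (y, νz) ∂(p0 s.1 s.2.1.1 s.2.2 : Measure X0))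
    (∫ y, h (y, νz) ∂(p0 z.1 z.2.1.1 z.2.2 : Measure X0))
  calc _ ≤ _ := h3
    _ ≤ _ := add_le_add h1 (h2.trans (mul_le_mul_of_nonneg_left h4 hL.le))
    _ = _ := by ring

lemma aux_pit_meas (pit : X0 → ProbabilityMeasure X → ProbabilityMeasure (U0 × Xi)) (Lpit : ℝ)
    (hLpit : 0 < Lpit)
    (hpit : ∀ (x0 x0' : X0) (μ μ' : ProbabilityMeasure X) (g : U0 × Xi → ℝ),
      (∀ a b : U0 × Xi, |g a - g b| ≤ dist a.1 b.1 + dist a.2 b.2) →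
      |∫ a, g a ∂(pit x0 μ : Measure (U0 × Xi)) - ∫ a, g a ∂(pit x0' μ' : Measure (U0 × Xi))|
        ≤ Lpit * (dist x0 x0' + W1 μ μ')) :
    Measurable fun y : X0 × ProbabilityMeasure X => (pit y.1 y.2 : Measure (U0 × Xi)) := by
  refine aux_meas_kernel _ (fun _ => inferInstance) Lpit hLpit fun a b f hf => ?_
  refine hpit _ _ _ _ f fun c d => ?_
  have := hf.dist_le_mul c d
  rw [Real.dist_eq] at this
  simp only [NNReal.coe_one, one_mul] at this
  exact this.trans (max_le_add_of_nonneg dist_nonneg dist_nonneg)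

lemma aux_p0_meas (p0 : X0 → U0 → ProbabilityMeasure X → ProbabilityMeasure X0) (Lp0 : ℝ)
    (hLp0 : 0 < Lp0)
    (hp0 : ∀ (x0 x0' : X0) (u0 u0' : U0) (μ μ' : ProbabilityMeasure X) (f : X0 → ℝ),
        LipschitzWith 1 f →
      |∫ y, f y ∂(p0 x0 u0 μ : Measure X0) - ∫ y, f y ∂(p0 x0' u0' μ' : Measure X0)|
        ≤ Lp0 * (dist x0 x0' + dist u0 u0' + W1 μ μ')) :
    Measurable fun y : (X0 × U0) × ProbabilityMeasure X => (p0 y.1.1 y.1.2 y.2 : Measure X0) := by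
  refine aux_meas_kernel _ (fun _ => inferInstance) (2 * Lp0) (by positivity) fun a b f hf => ?_
  refine (hp0 _ _ _ _ _ _ f hf).trans ?_
  have e1 : dist a.1.1 b.1.1 ≤ dist a.1 b.1 := le_max_left _ _
  have e2 : dist a.1.2 b.1.2 ≤ dist a.1 b.1 := le_max_right _ _
  have e5 := aux_W_nonneg a.2 b.2
  rw [mul_comm 2, mul_assoc]
  refine mul_le_mul_of_nonneg_left ?_ hLp0.le
  linarith

/-- The one-agent transition, averaged over the action. -/
lemma aux_q (p : X → U → X0 → U0 → ProbabilityMeasure X → ProbabilityMeasure X) (Lp : ℝ)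
    (hLp : 0 < Lp)
    (hp : ∀ (x x' : X) (u u' : U) (x0 x0' : X0) (u0 u0' : U0)
        (μ μ' : ProbabilityMeasure X) (f : X → ℝ), LipschitzWith 1 f →
      |∫ y, f y ∂(p x u x0 u0 μ : Measure X) - ∫ y, f y ∂(p x' u' x0' u0' μ' : Measure X)|
        ≤ Lp * (dist x x' + dist u u' + dist x0 x0' + dist u0 u0' + W1 μ μ'))
    (Γ : Xi → X → ProbabilityMeasure U) (LPi LΓ : ℝ) (hLPi : 0 < LPi) (hLΓ : 0 < LΓ)
    (hΓrule : ∀ (ξ : Xi) (x x' : X) (g : U → ℝ), LipschitzWith 1 g →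
      |∫ u, g u ∂(Γ ξ x : Measure U) - ∫ u, g u ∂(Γ ξ x' : Measure U)| ≤ LPi * dist x x')
    (hΓ : ∀ (ξ ξ' : Xi) (x : X) (g : U → ℝ), LipschitzWith 1 g →
      |∫ u, g u ∂(Γ ξ x : Measure U) - ∫ u, g u ∂(Γ ξ' x : Measure U)| ≤ LΓ * dist ξ ξ')
    (q : Xi → X → X0 → U0 → ProbabilityMeasure X → Measure X)
    (hq : ∀ ξ x x0 u0 μ, q ξ x x0 u0 μ =
      ((Γ ξ x : Measure U)).bind fun u => (p x u x0 u0 μ : Measure X)) :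
    (∀ ξ x x0 u0 μ, IsProbabilityMeasure (q ξ x x0 u0 μ)) ∧
    ∀ (ξ ξ' : Xi) (x x' : X) (x0 x0' : X0) (u0 u0' : U0)
        (μ μ' : ProbabilityMeasure X) (f : X → ℝ), LipschitzWith 1 f →
      |∫ y, f y ∂(q ξ x x0 u0 μ) - ∫ y, f y ∂(q ξ' x' x0' u0' μ')|
        ≤ Lp * (1 + LPi + LΓ) * (dist ξ ξ' + dist x x' + dist x0 x0' + dist u0 u0' + W1 μ μ') := by
  have hL1 : ∀ x x0 u0 μ (f : X → ℝ), LipschitzWith 1 f → ∀ u u',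
      |∫ y, f y ∂(p x u x0 u0 μ : Measure X) - ∫ y, f y ∂(p x u' x0 u0 μ : Measure X)|
        ≤ Lp * dist u u' := fun x x0 u0 μ f hf u u' => by
    have := hp x x u u' x0 x0 u0 u0 μ μ f hf
    simpa [aux_W_self] using this
  have hlip : ∀ x x0 u0 μ (f : X → ℝ), LipschitzWith 1 f → LipschitzWith Lp.toNNReal
      fun u => ∫ y, f y ∂(p x u x0 u0 μ : Measure X) := fun x x0 u0 μ f hf =>
    LipschitzWith.of_dist_le_mul fun u u' => by
      rw [Real.dist_eq, Real.coe_toNNReal _ hLp.le]; exact hL1 x x0 u0 μ f hf u u'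
  have hmeas : ∀ x x0 u0 μ, Measurable fun u => (p x u x0 u0 μ : Measure X) := by
    intro x x0 u0 μ
    refine aux_meas_of_lip _ (fun _ => inferInstance) fun K f hf => ?_
    have hK : (0 : ℝ) < K + 1 := by positivity
    refine (LipschitzWith.of_dist_le_mul (K := ((K + 1) * Lp.toNNReal))
      fun u u' => ?_).continuous.measurable
    have := aux_scale _ _ _ (fun f hf => hL1 x x0 u0 μ f hf u u') (K + 1) hK f (fun y z => by
      have := hf.dist_le_mul y z
      rw [Real.dist_eq] at this
      nlinarith [dist_nonneg (x := y) (y := z)])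
    rw [Real.dist_eq]
    push_cast
    rw [Real.coe_toNNReal _ hLp.le, mul_assoc]
    exact this
  have hpq : ∀ ξ x x0 u0 μ, IsProbabilityMeasure (q ξ x x0 u0 μ) := fun ξ x x0 u0 μ => by
    rw [hq]
    exact (aux_integral_bind _ _ (hmeas x x0 u0 μ) (fun _ => inferInstance) (fun _ => 0)
      measurable_const 0 (by simp)).1
  refine ⟨hpq, ?_⟩
  intro ξ ξ' x x' x0 x0' u0 u0' μ μ' f hf
  have hint : ∀ ξ x x0 u0 μ, ∫ y, f y ∂(q ξ x x0 u0 μ) =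
      ∫ u, ∫ y, f y ∂(p x u x0 u0 μ : Measure X) ∂(Γ ξ x : Measure U) := by
    intro ξ x x0 u0 μ
    rw [hq]
    obtain ⟨C, hC⟩ := isCompact_univ.exists_bound_of_continuousOn hf.continuous.continuousOn
    exact (aux_integral_bind _ _ (hmeas x x0 u0 μ) (fun _ => inferInstance) f
      hf.continuous.measurable C (fun b => hC b (Set.mem_univ _))).2
  rw [hint, hint]
  set φ := fun u => ∫ y, f y ∂(p x u x0 u0 μ : Measure X)
  set φ' := fun u => ∫ y, f y ∂(p x' u x0' u0' μ' : Measure X)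
  have h1 := aux_diff (Γ ξ x : Measure U) φ φ' (aux_lip_int (hlip x x0 u0 μ f hf) _)
    (aux_lip_int (hlip x' x0' u0' μ' f hf) _)
    (Lp * (dist x x' + dist x0 x0' + dist u0 u0' + W1 μ μ')) (fun u => by
      have := hp x x' u u x0 x0' u0 u0' μ μ' f hf
      simpa using this)
  have h2 := aux_scale _ _ _ (hΓrule ξ x x') Lp hLp φ' (hL1 x' x0' u0' μ' f hf)
  have h3 := aux_scale _ _ _ (hΓ ξ ξ' x') Lp hLp φ' (hL1 x' x0' u0' μ' f hf)
  have h4 := abs_sub_le (∫ u, φ u ∂(Γ ξ x : Measure U)) (∫ u, φ' u ∂(Γ ξ x : Measure U))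
    (∫ u, φ' u ∂(Γ ξ' x' : Measure U))
  have h5 := abs_sub_le (∫ u, φ' u ∂(Γ ξ x : Measure U)) (∫ u, φ' u ∂(Γ ξ x' : Measure U))
    (∫ u, φ' u ∂(Γ ξ' x' : Measure U))
  have d1 := dist_nonneg (x := x) (y := x')
  have d2 := dist_nonneg (x := x0) (y := x0')
  have d3 := dist_nonneg (x := u0) (y := u0')
  have d4 := dist_nonneg (x := ξ) (y := ξ')
  have d5 := aux_W_nonneg μ μ'
  set d := dist ξ ξ' + dist x x' + dist x0 x0' + dist u0 u0' + W1 μ μ' with hd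
  have i1 : Lp * (dist x x' + dist x0 x0' + dist u0 u0' + W1 μ μ') ≤ Lp * d := by
    gcongr; linarith
  have i2 : Lp * (LPi * dist x x') ≤ Lp * (LPi * d) := by gcongr; linarith
  have i3 : Lp * (LΓ * dist ξ ξ') ≤ Lp * (LΓ * d) := by gcongr; linarith
  calc _ ≤ _ := h4
    _ ≤ Lp * d + (Lp * (LPi * d) + Lp * (LΓ * d)) := by linarith
    _ = _ := by ring

lemma aux_TG (q : Xi → X → X0 → U0 → ProbabilityMeasure X → Measure X)
    (hq1 : ∀ ξ x x0 u0 μ, IsProbabilityMeasure (q ξ x x0 u0 μ)) (Lq : ℝ) (hLq : 0 < Lq)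
    (hq : ∀ (ξ ξ' : Xi) (x x' : X) (x0 x0' : X0) (u0 u0' : U0)
        (μ μ' : ProbabilityMeasure X) (f : X → ℝ), LipschitzWith 1 f →
      |∫ y, f y ∂(q ξ x x0 u0 μ) - ∫ y, f y ∂(q ξ' x' x0' u0' μ')|
        ≤ Lq * (dist ξ ξ' + dist x x' + dist x0 x0' + dist u0 u0' + W1 μ μ'))
    (TG : X0 → U0 → Xi → ProbabilityMeasure X → ProbabilityMeasure X)
    (hTG : ∀ (x0 : X0) (u0 : U0) (ξ : Xi) (μ : ProbabilityMeasure X),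
      (TG x0 u0 ξ μ : Measure X) = (μ : Measure X).bind fun x => q ξ x x0 u0 μ) :
    (Measurable fun z : (Xi × X × X0 × U0) × ProbabilityMeasure X =>
      q z.1.1 z.1.2.1 z.1.2.2.1 z.1.2.2.2 z.2) ∧
    (∀ x0 u0 ξ μ, ∀ f : X → ℝ, LipschitzWith 1 f →
      ∫ y, f y ∂(TG x0 u0 ξ μ : Measure X) =
        ∫ x, ∫ y, f y ∂(q ξ x x0 u0 μ) ∂(μ : Measure X)) ∧
    (∀ (x0 x0' : X0) (u0 u0' : U0) (ξ ξ' : Xi) (μ μ' : ProbabilityMeasure X),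
      W1 (TG x0 u0 ξ μ) (TG x0' u0' ξ' μ') ≤
        2 * Lq * (dist x0 x0' + dist u0 u0' + dist ξ ξ' + W1 μ μ')) ∧
    (Measurable fun z : X0 × (U0 × Xi) × ProbabilityMeasure X => TG z.1 z.2.1.1 z.2.1.2 z.2.2) := by
  have hmq : Measurable fun z : (Xi × X × X0 × U0) × ProbabilityMeasure X =>
      q z.1.1 z.1.2.1 z.1.2.2.1 z.1.2.2.2 z.2 := by
    refine aux_meas_kernel _ (fun _ => hq1 _ _ _ _ _) (4 * Lq) (by positivity) fun a b f hf => ?_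
    refine (hq _ _ _ _ _ _ _ _ _ _ f hf).trans ?_
    have e1 : dist a.1.1 b.1.1 ≤ dist a.1 b.1 := le_max_left _ _
    have e2 : dist a.1.2 b.1.2 ≤ dist a.1 b.1 := le_max_right _ _
    have e3 : dist a.1.2.1 b.1.2.1 ≤ dist a.1.2 b.1.2 := le_max_left _ _
    have e4 : dist a.1.2.2 b.1.2.2 ≤ dist a.1.2 b.1.2 := le_max_right _ _
    have e5 : dist a.1.2.2.1 b.1.2.2.1 ≤ dist a.1.2.2 b.1.2.2 := le_max_left _ _
    have e6 : dist a.1.2.2.2 b.1.2.2.2 ≤ dist a.1.2.2 b.1.2.2 := le_max_right _ _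
    have e7 := aux_W_nonneg a.2 b.2
    rw [mul_comm 4, mul_assoc]
    refine mul_le_mul_of_nonneg_left ?_ hLq.le
    linarith
  have hmx : ∀ ξ x0 u0 μ, Measurable fun x => q ξ x x0 u0 μ := fun ξ x0 u0 μ =>
    hmq.comp (f := fun x => ((ξ, x, x0, u0), μ)) (by fun_prop)
  have hint : ∀ x0 u0 ξ μ, ∀ f : X → ℝ, LipschitzWith 1 f →
      ∫ y, f y ∂(TG x0 u0 ξ μ : Measure X) =
        ∫ x, ∫ y, f y ∂(q ξ x x0 u0 μ) ∂(μ : Measure X) := by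
    intro x0 u0 ξ μ f hf
    rw [hTG]
    obtain ⟨C, hC⟩ := isCompact_univ.exists_bound_of_continuousOn hf.continuous.continuousOn
    exact (aux_integral_bind _ _ (hmx ξ x0 u0 μ) (fun _ => hq1 _ _ _ _ _) f
      hf.continuous.measurable C (fun b => hC b (Set.mem_univ _))).2
  have hW : ∀ (x0 x0' : X0) (u0 u0' : U0) (ξ ξ' : Xi) (μ μ' : ProbabilityMeasure X),
      W1 (TG x0 u0 ξ μ) (TG x0' u0' ξ' μ') ≤
        2 * Lq * (dist x0 x0' + dist u0 u0' + dist ξ ξ' + W1 μ μ') := by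
    intro x0 x0' u0 u0' ξ ξ' μ μ'
    refine aux_W_le _ _ _ fun f hf => ?_
    rw [hint _ _ _ _ f hf, hint _ _ _ _ f hf]
    have hL1 : ∀ x0 u0 ξ μ, ∀ x x', |∫ y, f y ∂(q ξ x x0 u0 μ) - ∫ y, f y ∂(q ξ x' x0 u0 μ)|
        ≤ Lq * dist x x' := fun x0 u0 ξ μ x x' => by
      have := hq ξ ξ x x' x0 x0 u0 u0 μ μ f hf
      simpa [aux_W_self] using this
    have hlip : ∀ x0 u0 ξ μ, LipschitzWith Lq.toNNReal fun x => ∫ y, f y ∂(q ξ x x0 u0 μ) :=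
      fun x0 u0 ξ μ => LipschitzWith.of_dist_le_mul fun u u' => by
        rw [Real.dist_eq, Real.coe_toNNReal _ hLq.le]; exact hL1 x0 u0 ξ μ u u'
    set φ := fun x => ∫ y, f y ∂(q ξ x x0 u0 μ)
    set φ' := fun x => ∫ y, f y ∂(q ξ' x x0' u0' μ')
    have h1 := aux_diff (μ : Measure X) φ φ' (aux_lip_int (hlip x0 u0 ξ μ) _)
      (aux_lip_int (hlip x0' u0' ξ' μ') _)
      (Lq * (dist ξ ξ' + dist x0 x0' + dist u0 u0' + W1 μ μ')) (fun x => by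
        have := hq ξ ξ' x x x0 x0' u0 u0' μ μ' f hf
        simpa using this)
    have h2 := aux_scale _ _ _ (aux_le_W μ μ') Lq hLq φ' (hL1 x0' u0' ξ' μ')
    have h4 := abs_sub_le (∫ x, φ x ∂(μ : Measure X)) (∫ x, φ' x ∂(μ : Measure X))
      (∫ x, φ' x ∂(μ' : Measure X))
    have d2 := dist_nonneg (x := x0) (y := x0')
    have d3 := dist_nonneg (x := u0) (y := u0')
    have d4 := dist_nonneg (x := ξ) (y := ξ')
    have i1 : Lq * W1 μ μ' ≤ Lq * (dist ξ ξ' + dist x0 x0' + dist u0 u0' + W1 μ μ') := by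
      gcongr; linarith
    calc _ ≤ _ := h4
      _ ≤ _ := add_le_add h1 (h2.trans i1)
      _ = _ := by ring
  refine ⟨hmq, hint, hW, ?_⟩
  have h1 : Measurable fun z : (X0 × U0 × Xi) × ProbabilityMeasure X =>
      (TG z.1.1 z.1.2.1 z.1.2.2 z.2 : Measure X) := by
    refine aux_meas_kernel _ (fun _ => inferInstance) (2 * Lq * 3) (by positivity)
      fun a b f hf => ?_
    refine ((aux_le_W _ _ f hf).trans (hW _ _ _ _ _ _ _ _)).trans ?_
    have e1 : dist a.1.1 b.1.1 ≤ dist a.1 b.1 := le_max_left _ _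
    have e2 : dist a.1.2 b.1.2 ≤ dist a.1 b.1 := le_max_right _ _
    have e3 : dist a.1.2.1 b.1.2.1 ≤ dist a.1.2 b.1.2 := le_max_left _ _
    have e4 : dist a.1.2.2 b.1.2.2 ≤ dist a.1.2 b.1.2 := le_max_right _ _
    have e7 := aux_W_nonneg a.2 b.2
    rw [mul_assoc (2 * Lq)]
    refine mul_le_mul_of_nonneg_left ?_ (by positivity)
    linarith
  exact Measurable.subtype_mk (h1.comp
    (f := fun s : X0 × (U0 × Xi) × ProbabilityMeasure X => ((s.1, s.2.1.1, s.2.1.2), s.2.2))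
    (by fun_prop))

end M

/-- Integration against the result of one transition followed by sampling the joint action. -/
lemma aux_step1 {Y A C : Type*} [MeasurableSpace Y] [MeasurableSpace A] [MeasurableSpace C]
    (m : Measure Y) [IsProbabilityMeasure m] (R : Y → Measure A) (hR : Measurable R)
    (hR1 : ∀ y, IsProbabilityMeasure (R y)) (G : Y → A → C)
    (hG : Measurable (Function.uncurry G)) (g : C → ℝ) (hg : Measurable g)
    (hb : ∃ K, ∀ c, |g c| ≤ K) :
    IsProbabilityMeasure (m.bind fun y => (R y).map (G y)) ∧
    ∫ c, g c ∂(m.bind fun y => (R y).map (G y)) = ∫ y, ∫ a, g (G y a) ∂(R y) ∂m := by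
  obtain ⟨K, hK⟩ := hb
  have hGy : ∀ y, Measurable (G y) := fun y => hG.comp measurable_prodMk_left
  obtain ⟨h1, h2⟩ := aux_integral_bind m (fun y => (R y).map (G y)) (aux_meas_map R hR hR1 G hG)
    (fun y => by have := hR1 y; exact Measure.isProbabilityMeasure_map (hGy y).aemeasurable)
    g hg K hK
  refine ⟨h1, h2.trans (integral_congr_ae (Filter.Eventually.of_forall fun y => ?_))⟩
  exact integral_map (hGy y).aemeasurable hg.aestronglyMeasurable

lemma aux_step2 {S Y A C : Type*} [MeasurableSpace S] [MeasurableSpace Y] [MeasurableSpace A]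
    [MeasurableSpace C] (m : Measure S) [IsProbabilityMeasure m]
    (k : S → Measure Y) (hk : Measurable k) (hk1 : ∀ s, IsProbabilityMeasure (k s))
    (R : S → Y → Measure A) (hR : Measurable (Function.uncurry R))
    (hR1 : ∀ s y, IsProbabilityMeasure (R s y)) (G : S → Y → A → C)
    (hG : Measurable (fun z : (S × Y) × A => G z.1.1 z.1.2 z.2)) (g : C → ℝ) (hg : Measurable g)
    (hb : ∃ K, ∀ c, |g c| ≤ K) :
    IsProbabilityMeasure (m.bind fun s => (k s).bind fun y => (R s y).map (G s y)) ∧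
    ∫ c, g c ∂(m.bind fun s => (k s).bind fun y => (R s y).map (G s y)) =
      ∫ s, ∫ y, ∫ a, g (G s y a) ∂(R s y) ∂(k s) ∂m := by
  have h0 : ∀ s, _ := fun s => aux_step1 (k s) (R s) (hR.comp measurable_prodMk_left) (hR1 s) (G s)
    (hG.comp (g := fun z : (S × Y) × A => G z.1.1 z.1.2 z.2)
      (f := fun z : Y × A => ((s, z.1), z.2)) (by fun_prop)) g hg hb
  obtain ⟨K, hK⟩ := hb
  obtain ⟨h1, h2⟩ := aux_integral_bind m (fun s => (k s).bind fun y => (R s y).map (G s y))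
    (aux_meas_bind k hk hk1 _ (aux_meas_map (fun z : S × Y => R z.1 z.2) hR
      (fun z => hR1 _ _) (fun z => G z.1 z.2) hG)) (fun s => (h0 s).1) g hg K hK
  exact ⟨h1, h2.trans (integral_congr_ae (Filter.Eventually.of_forall fun s => (h0 s).2))⟩

section P
variable {X U X0 U0 Xi : Type*}
    [MetricSpace X] [CompactSpace X] [MeasurableSpace X] [BorelSpace X] [Nonempty X]
    [MetricSpace U] [CompactSpace U] [MeasurableSpace U] [BorelSpace U]
    [MetricSpace X0] [CompactSpace X0] [MeasurableSpace X0] [BorelSpace X0]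
    [MetricSpace U0] [CompactSpace U0] [MeasurableSpace U0] [BorelSpace U0]
    [MetricSpace Xi] [CompactSpace Xi] [MeasurableSpace Xi] [BorelSpace Xi]

lemma aux_Wemp_int (N : ℕ) (ν : ProbabilityMeasure X) (m : Measure (Fin N → X))
    [IsProbabilityMeasure m] : Integrable (fun y => W1 (emp N y) ν) m :=
  aux_bint m ((aux_meas_W ν).comp (aux_emp_meas N)) ⟨2 * Metric.diam (Set.univ : Set X),
    fun y => by rw [abs_of_nonneg (aux_W_nonneg _ _)]; exact aux_W_le_diam _ _⟩

lemma aux_point (N : ℕ) (P : Measure X0) [IsProbabilityMeasure P] (κ : Fin N → Measure X)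
    (hκ : ∀ i, IsProbabilityMeasure (κ i)) (ν : ProbabilityMeasure X) (η : ℝ)
    (hW : ∫ y, W1 (emp N y) ν ∂(Measure.pi κ) ≤ η)
    (h : X0 × ProbabilityMeasure X → ℝ) (L : ℝ) (hL : 0 < L) (hh : LipH h L) :
    |∫ y, h (y.1, emp N y.2) ∂(P.prod (Measure.pi κ)) - ∫ y0, h (y0, ν) ∂P| ≤ L * η := by
  have e1 : ∫ y0, h (y0, ν) ∂P = ∫ y : X0 × (Fin N → X), h (y.1, ν) ∂(P.prod (Measure.pi κ)) := by
    rw [integral_fun_fst (fun y0 => h (y0, ν))]; simp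
  have e2 : ∫ y : X0 × (Fin N → X), W1 (emp N y.2) ν ∂(P.prod (Measure.pi κ)) =
      ∫ y, W1 (emp N y) ν ∂(Measure.pi κ) := by
    rw [integral_fun_snd (fun y => W1 (emp N y) ν)]; simp
  have hm := hh.meas hL
  obtain ⟨C, hC⟩ := hh.bdd hL
  have hem := aux_emp_meas (X := X) N
  have i1 : Integrable (fun y : X0 × (Fin N → X) => h (y.1, emp N y.2)) (P.prod (Measure.pi κ)) :=
    aux_bint _ (hm.comp (by fun_prop)) ⟨C, fun _ => hC _⟩
  have i2 : Integrable (fun y : X0 × (Fin N → X) => h (y.1, ν)) (P.prod (Measure.pi κ)) :=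
    aux_bint _ (hm.comp (by fun_prop)) ⟨C, fun _ => hC _⟩
  have i3 : Integrable (fun y : X0 × (Fin N → X) => L * W1 (emp N y.2) ν)
      (P.prod (Measure.pi κ)) := by
    refine Integrable.const_mul ?_ L
    exact (aux_Wemp_int N ν (Measure.pi κ)).comp_snd P
  rw [e1, ← integral_sub i1 i2]
  refine (abs_integral_le_integral_abs).trans ?_
  refine (integral_mono (i1.sub i2).abs i3 fun y => ?_).trans ?_
  · have := hh (y.1, emp N y.2) (y.1, ν)
    simpa using this
  · rw [integral_const_mul, e2]
    exact mul_le_mul_of_nonneg_left hW hL.le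

/-- The initial step. -/
lemma aux_init (pit : X0 → ProbabilityMeasure X → ProbabilityMeasure (U0 × Xi))
    (Lpit : ℝ) (hLpit : 0 < Lpit)
    (hpit : ∀ (x0 x0' : X0) (μ μ' : ProbabilityMeasure X) (g : U0 × Xi → ℝ),
      (∀ a b : U0 × Xi, |g a - g b| ≤ dist a.1 b.1 + dist a.2 b.2) →
      |∫ a, g a ∂(pit x0 μ : Measure (U0 × Xi)) - ∫ a, g a ∂(pit x0' μ' : Measure (U0 × Xi))|
        ≤ Lpit * (dist x0 x0' + W1 μ μ')) (μ0 : ProbabilityMeasure X) (x00 : X0) (N : ℕ)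
    (g : X0 × (U0 × Xi) × ProbabilityMeasure X → ℝ) (L : ℝ) (hL : 0 < L) (hg : LipS g L) :
    IsProbabilityMeasure ((Measure.pi fun _ : Fin N => (μ0 : Measure X)).bind fun x =>
              ((pit x00 (emp N x) : Measure (U0 × Xi))).map fun a => (x00, a, x)) ∧
    IsProbabilityMeasure ((pit x00 μ0 : Measure (U0 × Xi)).map fun a => (x00, a, μ0)) ∧
    ∀ η, ∫ y, W1 (emp N y) μ0 ∂(Measure.pi fun _ : Fin N => (μ0 : Measure X)) ≤ η →
    |∫ s, g (s.1, s.2.1, emp N s.2.2) ∂((Measure.pi fun _ : Fin N => (μ0 : Measure X)).bind fun x =>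
              ((pit x00 (emp N x) : Measure (U0 × Xi))).map fun a => (x00, a, x))
      - ∫ s, g s ∂((pit x00 μ0 : Measure (U0 × Xi)).map fun a => (x00, a, μ0))|
      ≤ L * (1 + Lpit) * η := by
  have hgm := hg.meas hL
  obtain ⟨C, hC⟩ := hg.bdd hL
  have hem := aux_emp_meas (X := X) N
  have hG : Measurable fun a : U0 × Xi => (x00, a, μ0) := by fun_prop
  obtain ⟨h1, h2⟩ := aux_step1 (Measure.pi fun _ : Fin N => (μ0 : Measure X))
    (fun x => (pit x00 (emp N x) : Measure (U0 × Xi)))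
    ((aux_pit_meas pit Lpit hLpit hpit).comp
      (f := fun x : Fin N → X => (x00, emp N x)) (by fun_prop)) (fun _ => inferInstance)
    (fun x a => (x00, a, x)) (by simp only [Function.uncurry_def]; fun_prop)
    (fun s => g (s.1, s.2.1, emp N s.2.2)) (hgm.comp (by fun_prop)) ⟨C, fun _ => hC _⟩
  refine ⟨h1, Measure.isProbabilityMeasure_map hG.aemeasurable, fun η hη => ?_⟩
  rw [h2, integral_map hG.aemeasurable hgm.aestronglyMeasurable]
  have := aux_point N (Measure.dirac x00) (fun _ : Fin N => (μ0 : Measure X))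
    (fun _ => inferInstance) μ0 η hη _ (L * (1 + Lpit)) (by positivity)
    (aux_h pit Lpit hLpit hpit g L hL hg)
  have hHm := (aux_h pit Lpit hLpit hpit g L hL hg).meas (by positivity)
  have hHb := (aux_h pit Lpit hLpit hpit g L hL hg).bdd (by positivity)
  have hI : Integrable (fun y : X0 × (Fin N → X) =>
      (fun y : X0 × ProbabilityMeasure X => ∫ a, g (y.1, a, y.2)
        ∂(pit y.1 y.2 : Measure (U0 × Xi))) (y.1, emp N y.2))
      ((Measure.dirac x00).prod (Measure.pi fun _ : Fin N => (μ0 : Measure X))) :=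
    aux_bint _ (hHm.comp (by fun_prop)) (by obtain ⟨D, hD⟩ := hHb; exact ⟨D, fun _ => hD _⟩)
  rw [integral_prod _ hI, integral_dirac, integral_dirac] at this
  exact this

/-- The limiting step. -/
lemma aux_limstep (pit : X0 → ProbabilityMeasure X → ProbabilityMeasure (U0 × Xi))
    (hpm : Measurable fun y : X0 × ProbabilityMeasure X => (pit y.1 y.2 : Measure (U0 × Xi)))
    (p0 : X0 → U0 → ProbabilityMeasure X → ProbabilityMeasure X0)
    (hp0m : Measurable fun y : (X0 × U0) × ProbabilityMeasure X =>
      (p0 y.1.1 y.1.2 y.2 : Measure X0))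
    (TG : X0 → U0 → Xi → ProbabilityMeasure X → ProbabilityMeasure X)
    (hTm : Measurable fun z : X0 × (U0 × Xi) × ProbabilityMeasure X =>
      TG z.1 z.2.1.1 z.2.1.2 z.2.2)
    (m : Measure (X0 × (U0 × Xi) × ProbabilityMeasure X)) [IsProbabilityMeasure m]
    (g : X0 × (U0 × Xi) × ProbabilityMeasure X → ℝ) (hg : Measurable g)
    (hb : ∃ C, ∀ s, |g s| ≤ C) :
    IsProbabilityMeasure (m.bind fun s =>
      ((p0 s.1 s.2.1.1 s.2.2 : Measure X0)).bind fun y0 =>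
        ((pit y0 (TG s.1 s.2.1.1 s.2.1.2 s.2.2) : Measure (U0 × Xi))).map
          fun a => (y0, a, TG s.1 s.2.1.1 s.2.1.2 s.2.2)) ∧
    ∫ s, g s ∂(m.bind fun s =>
      ((p0 s.1 s.2.1.1 s.2.2 : Measure X0)).bind fun y0 =>
        ((pit y0 (TG s.1 s.2.1.1 s.2.1.2 s.2.2) : Measure (U0 × Xi))).map
          fun a => (y0, a, TG s.1 s.2.1.1 s.2.1.2 s.2.2)) =
    ∫ s, ∫ y0, ∫ a, g (y0, a, TG s.1 s.2.1.1 s.2.1.2 s.2.2)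
      ∂(pit y0 (TG s.1 s.2.1.1 s.2.1.2 s.2.2) : Measure (U0 × Xi))
      ∂(p0 s.1 s.2.1.1 s.2.2 : Measure X0) ∂m := by
  refine aux_step2 m (fun s => (p0 s.1 s.2.1.1 s.2.2 : Measure X0))
    (hp0m.comp (f := fun s : X0 × (U0 × Xi) × ProbabilityMeasure X => ((s.1, s.2.1.1), s.2.2))
      (by fun_prop)) (fun _ => inferInstance)
    (fun s y0 => (pit y0 (TG s.1 s.2.1.1 s.2.1.2 s.2.2) : Measure (U0 × Xi))) ?_
    (fun _ _ => inferInstance) (fun s y0 a => (y0, a, TG s.1 s.2.1.1 s.2.1.2 s.2.2)) ?_ g hg hb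
  · exact hpm.comp (f := fun z : (X0 × (U0 × Xi) × ProbabilityMeasure X) × X0 =>
      (z.2, TG z.1.1 z.1.2.1.1 z.1.2.1.2 z.1.2.2))
      (measurable_snd.prodMk (hTm.comp measurable_fst))
  · exact (measurable_snd.comp measurable_fst).prodMk (measurable_snd.prodMk
      (hTm.comp (measurable_fst.comp measurable_fst)))

/-- The `N`-agent step. -/
lemma aux_Nstep (pit : X0 → ProbabilityMeasure X → ProbabilityMeasure (U0 × Xi))
    (hpm : Measurable fun y : X0 × ProbabilityMeasure X => (pit y.1 y.2 : Measure (U0 × Xi)))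
    (p0 : X0 → U0 → ProbabilityMeasure X → ProbabilityMeasure X0)
    (hp0m : Measurable fun y : (X0 × U0) × ProbabilityMeasure X =>
      (p0 y.1.1 y.1.2 y.2 : Measure X0))
    (q : Xi → X → X0 → U0 → ProbabilityMeasure X → Measure X)
    (hq1 : ∀ ξ x x0 u0 μ, IsProbabilityMeasure (q ξ x x0 u0 μ))
    (hqm : Measurable fun z : (Xi × X × X0 × U0) × ProbabilityMeasure X =>
      q z.1.1 z.1.2.1 z.1.2.2.1 z.1.2.2.2 z.2) (N : ℕ)
    (m : Measure (X0 × (U0 × Xi) × (Fin N → X))) [IsProbabilityMeasure m]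
    (g : X0 × (U0 × Xi) × ProbabilityMeasure X → ℝ) (hg : Measurable g)
    (hb : ∃ C, ∀ s, |g s| ≤ C) :
    (Measurable fun s : X0 × (U0 × Xi) × (Fin N → X) =>
      (p0 s.1 s.2.1.1 (emp N s.2.2) : Measure X0).prod
        (Measure.pi fun i => q s.2.1.2 (s.2.2 i) s.1 s.2.1.1 (emp N s.2.2))) ∧
    IsProbabilityMeasure (m.bind fun s =>
      (((p0 s.1 s.2.1.1 (emp N s.2.2) : Measure X0)).prod
        (Measure.pi fun i => q s.2.1.2 (s.2.2 i) s.1 s.2.1.1 (emp N s.2.2))).bind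
        fun y => ((pit y.1 (emp N y.2) : Measure (U0 × Xi))).map fun a => (y.1, a, y.2)) ∧
    ∫ s, g (s.1, s.2.1, emp N s.2.2) ∂(m.bind fun s =>
      (((p0 s.1 s.2.1.1 (emp N s.2.2) : Measure X0)).prod
        (Measure.pi fun i => q s.2.1.2 (s.2.2 i) s.1 s.2.1.1 (emp N s.2.2))).bind
        fun y => ((pit y.1 (emp N y.2) : Measure (U0 × Xi))).map fun a => (y.1, a, y.2)) =
    ∫ s, ∫ y, ∫ a, g (y.1, a, emp N y.2) ∂(pit y.1 (emp N y.2) : Measure (U0 × Xi))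
      ∂((p0 s.1 s.2.1.1 (emp N s.2.2) : Measure X0).prod
        (Measure.pi fun i => q s.2.1.2 (s.2.2 i) s.1 s.2.1.1 (emp N s.2.2))) ∂m := by
  have hem := aux_emp_meas (X := X) N
  have hkm : Measurable fun s : X0 × (U0 × Xi) × (Fin N → X) =>
      (p0 s.1 s.2.1.1 (emp N s.2.2) : Measure X0).prod
        (Measure.pi fun i => q s.2.1.2 (s.2.2 i) s.1 s.2.1.1 (emp N s.2.2)) := by
    refine aux_meas_prod (fun s : X0 × (U0 × Xi) × (Fin N → X) =>
      (p0 s.1 s.2.1.1 (emp N s.2.2) : Measure X0))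
      (hp0m.comp (f := fun s : X0 × (U0 × Xi) × (Fin N → X) =>
      ((s.1, s.2.1.1), emp N s.2.2)) (by fun_prop)) (fun _ => inferInstance) _ ?_
      (fun _ => inferInstance)
    refine aux_meas_pi (fun i (s : X0 × (U0 × Xi) × (Fin N → X)) =>
      q s.2.1.2 (s.2.2 i) s.1 s.2.1.1 (emp N s.2.2)) (fun i => ?_) (fun _ _ => inferInstance)
    exact hqm.comp (f := fun s : X0 × (U0 × Xi) × (Fin N → X) =>
      ((s.2.1.2, s.2.2 i, s.1, s.2.1.1), emp N s.2.2)) (by fun_prop)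
  refine ⟨hkm, ?_⟩
  refine aux_step2 m (fun s => (p0 s.1 s.2.1.1 (emp N s.2.2) : Measure X0).prod
        (Measure.pi fun i => q s.2.1.2 (s.2.2 i) s.1 s.2.1.1 (emp N s.2.2))) hkm
    (fun _ => inferInstance)
    (fun s y => (pit y.1 (emp N y.2) : Measure (U0 × Xi))) ?_
    (fun _ _ => inferInstance) (fun s y a => (y.1, a, y.2)) (by fun_prop)
    (fun s => g (s.1, s.2.1, emp N s.2.2)) (hg.comp (by fun_prop)) ?_
  · exact hpm.comp (f := fun z : (X0 × (U0 × Xi) × (Fin N → X)) × (X0 × (Fin N → X)) =>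
      (z.2.1, emp N z.2.2)) (by fun_prop)
  · obtain ⟨C, hC⟩ := hb
    exact ⟨C, fun _ => hC _⟩
end P
lemma aux_int_kernel {S Y : Type*} [MeasurableSpace S] [MeasurableSpace Y]
    (k : S → Measure Y) (hk : Measurable k) (hk1 : ∀ s, IsProbabilityMeasure (k s))
    (f : Y → ℝ) (hf : Measurable f) (hb : ∃ K, ∀ c, |f c| ≤ K) (m : Measure S)
    [IsProbabilityMeasure m] : Integrable (fun s => ∫ y, f y ∂(k s)) m := by
  let κ : Kernel S Y := ⟨k, hk⟩
  have : IsMarkovKernel κ := ⟨hk1⟩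
  obtain ⟨K, hK⟩ := hb
  have h1 : StronglyMeasurable fun s => ∫ y, f y ∂(κ s) := hf.stronglyMeasurable.integral_kernel
  refine aux_bint m h1.measurable ⟨K, fun s => ?_⟩
  have := hk1 s
  have h2 := norm_integral_le_of_norm_le_const (μ := k s) (f := f) (C := K)
    (Filter.Eventually.of_forall hK)
  simpa using h2

section Q
variable {X U X0 U0 Xi : Type*}
    [MetricSpace X] [CompactSpace X] [MeasurableSpace X] [BorelSpace X] [Nonempty X]
    [MetricSpace U] [CompactSpace U] [MeasurableSpace U] [BorelSpace U]
    [MetricSpace X0] [CompactSpace X0] [MeasurableSpace X0] [BorelSpace X0]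
    [MetricSpace U0] [CompactSpace U0] [MeasurableSpace U0] [BorelSpace U0]
    [MetricSpace Xi] [CompactSpace Xi] [MeasurableSpace Xi] [BorelSpace Xi]

/-- One-step comparison between the `N`-agent transition and the limiting transition. -/
lemma aux_Nbound (p0 : X0 → U0 → ProbabilityMeasure X → ProbabilityMeasure X0)
    (q : Xi → X → X0 → U0 → ProbabilityMeasure X → Measure X)
    (hq1 : ∀ ξ x x0 u0 μ, IsProbabilityMeasure (q ξ x x0 u0 μ))
    (TG : X0 → U0 → Xi → ProbabilityMeasure X → ProbabilityMeasure X)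
    (hTI : ∀ x0 u0 ξ μ, ∀ f : X → ℝ, LipschitzWith 1 f →
      ∫ y, f y ∂(TG x0 u0 ξ μ : Measure X) =
        ∫ x, ∫ y, f y ∂(q ξ x x0 u0 μ) ∂(μ : Measure X))
    (N : ℕ) (hN : N ≠ 0) (η : ℝ)
    (hlln : ∀ κ : Fin N → Measure X,
      (∀ i, IsProbabilityMeasure (κ i)) → ∀ ν : ProbabilityMeasure X,
      (∀ f : X → ℝ, LipschitzWith 1 f →
        ∫ x, f x ∂(ν : Measure X) = (N : ℝ)⁻¹ * ∑ i, ∫ x, f x ∂(κ i)) →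
      ∫ y, W1 (emp N y) ν ∂(Measure.pi κ) ≤ η)
    (hkm : Measurable fun s : X0 × (U0 × Xi) × (Fin N → X) =>
      (p0 s.1 s.2.1.1 (emp N s.2.2) : Measure X0).prod
        (Measure.pi fun i => q s.2.1.2 (s.2.2 i) s.1 s.2.1.1 (emp N s.2.2)))
    (m : Measure (X0 × (U0 × Xi) × (Fin N → X))) [IsProbabilityMeasure m]
    (h : X0 × ProbabilityMeasure X → ℝ) (L : ℝ) (hL : 0 < L) (hh : LipH h L)
    (P : X0 × (U0 × Xi) × ProbabilityMeasure X → ℝ)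
    (hP : ∀ s, P s = ∫ y0, h (y0, TG s.1 s.2.1.1 s.2.1.2 s.2.2)
      ∂(p0 s.1 s.2.1.1 s.2.2 : Measure X0))
    (LP : ℝ) (hLP : 0 < LP) (hPL : LipS P LP) :
    |∫ s, ∫ y, h (y.1, emp N y.2) ∂((p0 s.1 s.2.1.1 (emp N s.2.2) : Measure X0).prod
        (Measure.pi fun i => q s.2.1.2 (s.2.2 i) s.1 s.2.1.1 (emp N s.2.2))) ∂m
      - ∫ s, P (s.1, s.2.1, emp N s.2.2) ∂m| ≤ L * η := by
  have hem := aux_emp_meas (X := X) N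
  have hm := hh.meas hL
  obtain ⟨C, hC⟩ := hh.bdd hL
  obtain ⟨D, hD⟩ := hPL.bdd hLP
  refine aux_diff m _ _ (aux_int_kernel _ hkm (fun _ => inferInstance)
    (fun y : X0 × (Fin N → X) => h (y.1, emp N y.2)) (hm.comp (by fun_prop)) ⟨C, fun _ => hC _⟩ m)
    (aux_bint m ((hPL.meas hLP).comp (by fun_prop)) ⟨D, fun _ => hD _⟩) _ fun s => ?_
  simp only [Function.comp_apply]
  rw [hP]
  refine aux_point N _ _ (fun i => hq1 _ _ _ _ _) _ η (hlln _ (fun i => hq1 _ _ _ _ _) _ ?_)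
    h L hL hh
  intro f hf
  simp only
  rw [hTI _ _ _ _ f hf, aux_emp_int N hN]
end Q

section R
variable {X U X0 U0 Xi Θ : Type*}
    [MetricSpace X] [CompactSpace X] [MeasurableSpace X] [BorelSpace X] [Nonempty X]
    [MetricSpace U] [CompactSpace U] [MeasurableSpace U] [BorelSpace U]
    [MetricSpace X0] [CompactSpace X0] [MeasurableSpace X0] [BorelSpace X0]
    [MetricSpace U0] [CompactSpace U0] [MeasurableSpace U0] [BorelSpace U0]
    [MetricSpace Xi] [CompactSpace Xi] [MeasurableSpace Xi] [BorelSpace Xi]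

lemma aux_main (Lp Lp0 LPi LΓ Lpit : ℝ) (hLp : 0 < Lp) (hLp0 : 0 < Lp0) (hLPi : 0 < LPi)
    (hLΓ : 0 < LΓ) (hLpit : 0 < Lpit)
    (p : X → U → X0 → U0 → ProbabilityMeasure X → ProbabilityMeasure X)
    (hp : ∀ (x x' : X) (u u' : U) (x0 x0' : X0) (u0 u0' : U0)
        (μ μ' : ProbabilityMeasure X) (f : X → ℝ), LipschitzWith 1 f →
      |∫ y, f y ∂(p x u x0 u0 μ : Measure X) - ∫ y, f y ∂(p x' u' x0' u0' μ' : Measure X)|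
        ≤ Lp * (dist x x' + dist u u' + dist x0 x0' + dist u0 u0' + W1 μ μ'))
    (p0 : X0 → U0 → ProbabilityMeasure X → ProbabilityMeasure X0)
    (hp0 : ∀ (x0 x0' : X0) (u0 u0' : U0) (μ μ' : ProbabilityMeasure X) (f : X0 → ℝ),
        LipschitzWith 1 f →
      |∫ y, f y ∂(p0 x0 u0 μ : Measure X0) - ∫ y, f y ∂(p0 x0' u0' μ' : Measure X0)|
        ≤ Lp0 * (dist x0 x0' + dist u0 u0' + W1 μ μ'))
    (Γ : Xi → X → ProbabilityMeasure U)
    (hΓrule : ∀ (ξ : Xi) (x x' : X) (g : U → ℝ), LipschitzWith 1 g →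
      |∫ u, g u ∂(Γ ξ x : Measure U) - ∫ u, g u ∂(Γ ξ x' : Measure U)| ≤ LPi * dist x x')
    (hΓ : ∀ (ξ ξ' : Xi) (x : X) (g : U → ℝ), LipschitzWith 1 g →
      |∫ u, g u ∂(Γ ξ x : Measure U) - ∫ u, g u ∂(Γ ξ' x : Measure U)| ≤ LΓ * dist ξ ξ')
    (pit : Θ → X0 → ProbabilityMeasure X → ProbabilityMeasure (U0 × Xi))
    (hpit : ∀ (θ : Θ) (x0 x0' : X0) (μ μ' : ProbabilityMeasure X) (g : U0 × Xi → ℝ),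
      (∀ a b : U0 × Xi, |g a - g b| ≤ dist a.1 b.1 + dist a.2 b.2) →
      |∫ a, g a ∂(pit θ x0 μ : Measure (U0 × Xi))
          - ∫ a, g a ∂(pit θ x0' μ' : Measure (U0 × Xi))|
        ≤ Lpit * (dist x0 x0' + W1 μ μ'))
    (μ0 : ProbabilityMeasure X) (x00 : X0)
    (TG : X0 → U0 → Xi → ProbabilityMeasure X → ProbabilityMeasure X)
    (hTG : ∀ (x0 : X0) (u0 : U0) (ξ : Xi) (μ : ProbabilityMeasure X),
      (TG x0 u0 ξ μ : Measure X) = (μ : Measure X).bind fun x =>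
        ((Γ ξ x : Measure U)).bind fun u => (p x u x0 u0 μ : Measure X)) :
    ∀ t : ℕ, (∀ N θ, IsProbabilityMeasure (pLawNFrom p p0 Γ pit θ N
            ((Measure.pi fun _ : Fin N => (μ0 : Measure X)).bind fun x =>
              ((pit θ x00 (emp N x) : Measure (U0 × Xi))).map fun a => (x00, a, x)) t) ∧
        IsProbabilityMeasure (pLimLawFrom p0 pit TG θ
            (((pit θ x00 μ0 : Measure (U0 × Xi))).map fun a => (x00, a, μ0)) t)) ∧
      ∀ L > (0 : ℝ), ∀ ε > (0 : ℝ), ∃ N0 : ℕ, ∀ N ≥ N0, ∀ θ : Θ,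
      ∀ g : X0 × (U0 × Xi) × ProbabilityMeasure X → ℝ, LipS g L →
      |(∫ s, g (s.1, s.2.1, emp N s.2.2)
          ∂(pLawNFrom p p0 Γ pit θ N
            ((Measure.pi fun _ : Fin N => (μ0 : Measure X)).bind fun x =>
              ((pit θ x00 (emp N x) : Measure (U0 × Xi))).map fun a => (x00, a, x)) t))
        - ∫ s, g s
          ∂(pLimLawFrom p0 pit TG θ
            (((pit θ x00 μ0 : Measure (U0 × Xi))).map fun a => (x00, a, μ0)) t)| ≤ ε := by
  obtain ⟨q, hq⟩ : ∃ q : Xi → X → X0 → U0 → ProbabilityMeasure X → Measure X,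
    q = fun ξ x x0 u0 μ => ((Γ ξ x : Measure U)).bind fun u => (p x u x0 u0 μ : Measure X) :=
    ⟨_, rfl⟩
  obtain ⟨hq1, hqL⟩ := aux_q p Lp hLp hp Γ LPi LΓ hLPi hLΓ hΓrule hΓ q
    (fun _ _ _ _ _ => by rw [hq])
  have hLq : 0 < Lp * (1 + LPi + LΓ) := by positivity
  obtain ⟨hqm, hTI, hTL, hTm⟩ := aux_TG q hq1 _ hLq hqL TG
    (fun x0 u0 ξ μ => by rw [hTG, hq])
  have hp0m := aux_p0_meas p0 Lp0 hLp0 hp0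
  have hpm := fun θ => aux_pit_meas (pit θ) Lpit hLpit (hpit θ)
  have hstepN : ∀ N θ ι t, pLawNFrom p p0 Γ pit θ N ι (t + 1) =
      (pLawNFrom p p0 Γ pit θ N ι t).bind fun s =>
      (((p0 s.1 s.2.1.1 (emp N s.2.2) : Measure X0)).prod
        (Measure.pi fun i => q s.2.1.2 (s.2.2 i) s.1 s.2.1.1 (emp N s.2.2))).bind
        fun y => ((pit θ y.1 (emp N y.2) : Measure (U0 × Xi))).map fun a => (y.1, a, y.2) := by
    intro N θ ι t
    rw [hq]
    rfl
  intro t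
  induction t with
  | zero =>
    have h0 : LipS (fun _ : X0 × (U0 × Xi) × ProbabilityMeasure X => (0 : ℝ)) 1 := fun a b => by
      have e5 := aux_W_nonneg a.2.2 b.2.2
      simp only [sub_self, abs_zero]
      positivity
    refine ⟨fun N θ => ?_, fun L hL ε hε => ?_⟩
    · obtain ⟨h1, h2, -⟩ := aux_init (pit θ) Lpit hLpit (hpit θ) μ0 x00 N _ 1 one_pos h0
      exact ⟨h1, h2⟩
    · have hLh : 0 < L * (1 + Lpit) := by positivity
      obtain ⟨N0, hN0⟩ := aux_lln (X := X) (ε / (L * (1 + Lpit))) (by positivity)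
      refine ⟨N0, fun N hN θ g hg => ?_⟩
      obtain ⟨hN', hl⟩ := hN0 N hN
      obtain ⟨-, -, h3⟩ := aux_init (pit θ) Lpit hLpit (hpit θ) μ0 x00 N g L hL hg
      have h4 := h3 _ (hl (fun _ => (μ0 : Measure X)) (fun _ => inferInstance) μ0 fun f hf => by
        have : (N : ℝ) ≠ 0 := by exact_mod_cast hN'
        simp [this])
      rw [mul_div_cancel₀ _ hLh.ne'] at h4
      exact h4
  | succ t ih =>
    obtain ⟨ihp, ih⟩ := ih
    refine ⟨fun N θ => ?_, fun L hL ε hε => ?_⟩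
    · obtain ⟨i1, i2⟩ := ihp N θ
      refine ⟨?_, (aux_limstep (pit θ) (hpm θ) p0 hp0m TG hTm _ (fun _ => 0) measurable_const
        ⟨0, fun _ => by simp⟩).1⟩
      rw [hstepN]
      exact (aux_Nstep (pit θ) (hpm θ) p0 hp0m q hq1 hqm N _ (fun _ => 0) measurable_const
        ⟨0, fun _ => by simp⟩).2.1
    · have hLh : 0 < L * (1 + Lpit) := by positivity
      have hLP : 0 < L * (1 + Lpit) * (2 * (Lp * (1 + LPi + LΓ)) + Lp0) := by positivity
      obtain ⟨N1, hN1⟩ := ih _ hLP (ε / 2) (by positivity)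
      obtain ⟨N2, hN2⟩ := aux_lln (X := X) (ε / 2 / (L * (1 + Lpit))) (by positivity)
      refine ⟨max N1 N2, fun N hN θ g hg => ?_⟩
      obtain ⟨hN', hl⟩ := hN2 N (le_trans (le_max_right _ _) hN)
      obtain ⟨i1, i2⟩ := ihp N θ
      have hh := aux_h (pit θ) Lpit hLpit (hpit θ) g L hL hg
      have hPL := aux_P p0 Lp0 hLp0 hp0 TG _ (by positivity) hTL _ _ hLh hh
      have hN3 := hN1 N (le_trans (le_max_left _ _) hN) θ _ hPL
      have hlim := (aux_limstep (pit θ) (hpm θ) p0 hp0m TG hTm (pLimLawFrom p0 pit TG θ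
            (((pit θ x00 μ0 : Measure (U0 × Xi))).map fun a => (x00, a, μ0)) t) g (hg.meas hL)
            (hg.bdd hL)).2
      obtain ⟨hkm, -, hNs⟩ := aux_Nstep (pit θ) (hpm θ) p0 hp0m q hq1 hqm N
        (pLawNFrom p p0 Γ pit θ N
            ((Measure.pi fun _ : Fin N => (μ0 : Measure X)).bind fun x =>
              ((pit θ x00 (emp N x) : Measure (U0 × Xi))).map fun a => (x00, a, x)) t) g
            (hg.meas hL) (hg.bdd hL)
      have hb := aux_Nbound p0 q hq1 TG hTI N hN' _ hl hkm (pLawNFrom p p0 Γ pit θ N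
            ((Measure.pi fun _ : Fin N => (μ0 : Measure X)).bind fun x =>
              ((pit θ x00 (emp N x) : Measure (U0 × Xi))).map fun a => (x00, a, x)) t) _ _ hLh hh
              _ (fun _ => rfl) _ hLP hPL
      rw [mul_div_cancel₀ _ hLh.ne'] at hb
      rw [hstepN, hNs]
      have hlim' : ∫ s, g s ∂(pLimLawFrom p0 pit TG θ
            (((pit θ x00 μ0 : Measure (U0 × Xi))).map fun a => (x00, a, μ0)) (t + 1)) = _ := hlim
      rw [hlim']
      have := (abs_sub_le _ _ _).trans (add_le_add hb hN3)
      rw [add_halves] at this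
      exact this
end R
end Helpers

/-- propagation of chaos under parametrized joint policies. With Lipschitz
`p`, `p⁰`, `r`, an `L_Γ`-Lipschitz parameter map `Γ` into `L_Π`-Lipschitz decision rules, and a
Lipschitz, uniformly bounded joint policy `π̃^θ` with Lipschitz, uniformly bounded log-gradient
(score) `∇_θ log π̃^θ`, for any equi-Lipschitz family `ℱ` on `𝒳⁰ × 𝒰⁰ × 𝒫(𝒳)` and every time
`t`, uniformly over `f ∈ ℱ` and policy parameters `θ`,
`|E[f(x⁰ₜ^N, u⁰ₜ^N, μₜ^N)] − E[f(x⁰ₜ, u⁰ₜ, μₜ)]| → 0` as `N → ∞`. -/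
theorem statement17 {X U X0 U0 Xi Θ : Type*}
    [MetricSpace X] [CompactSpace X] [MeasurableSpace X] [BorelSpace X] [Nonempty X]
    [MetricSpace U] [CompactSpace U] [MeasurableSpace U] [BorelSpace U]
    [MetricSpace X0] [CompactSpace X0] [MeasurableSpace X0] [BorelSpace X0]
    [MetricSpace U0] [CompactSpace U0] [MeasurableSpace U0] [BorelSpace U0]
    [MetricSpace Xi] [CompactSpace Xi] [MeasurableSpace Xi] [BorelSpace Xi]
    [NormedAddCommGroup Θ] [NormedSpace ℝ Θ] [CompleteSpace Θ]
    (Lp Lp0 Lr LPi LΓ Lpit Ls Cs LF : ℝ)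
    (p : X → U → X0 → U0 → ProbabilityMeasure X → ProbabilityMeasure X)
    (hp : ∀ (x x' : X) (u u' : U) (x0 x0' : X0) (u0 u0' : U0)
        (μ μ' : ProbabilityMeasure X) (f : X → ℝ), LipschitzWith 1 f →
      |∫ y, f y ∂(p x u x0 u0 μ : Measure X) - ∫ y, f y ∂(p x' u' x0' u0' μ' : Measure X)|
        ≤ Lp * (dist x x' + dist u u' + dist x0 x0' + dist u0 u0' + W1 μ μ'))
    (p0 : X0 → U0 → ProbabilityMeasure X → ProbabilityMeasure X0)
    (hp0 : ∀ (x0 x0' : X0) (u0 u0' : U0) (μ μ' : ProbabilityMeasure X) (f : X0 → ℝ),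
        LipschitzWith 1 f →
      |∫ y, f y ∂(p0 x0 u0 μ : Measure X0) - ∫ y, f y ∂(p0 x0' u0' μ' : Measure X0)|
        ≤ Lp0 * (dist x0 x0' + dist u0 u0' + W1 μ μ'))
    (r : X0 → U0 → ProbabilityMeasure X → ℝ)
    (hr : ∀ (x0 x0' : X0) (u0 u0' : U0) (μ μ' : ProbabilityMeasure X),
      |r x0 u0 μ - r x0' u0' μ'| ≤ Lr * (dist x0 x0' + dist u0 u0' + W1 μ μ'))
    (Γ : Xi → X → ProbabilityMeasure U)
    (hΓrule : ∀ (ξ : Xi) (x x' : X) (g : U → ℝ), LipschitzWith 1 g →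
      |∫ u, g u ∂(Γ ξ x : Measure U) - ∫ u, g u ∂(Γ ξ x' : Measure U)| ≤ LPi * dist x x')
    (hΓ : ∀ (ξ ξ' : Xi) (x : X) (g : U → ℝ), LipschitzWith 1 g →
      |∫ u, g u ∂(Γ ξ x : Measure U) - ∫ u, g u ∂(Γ ξ' x : Measure U)| ≤ LΓ * dist ξ ξ')
    (pit : Θ → X0 → ProbabilityMeasure X → ProbabilityMeasure (U0 × Xi))
    (hpit : ∀ (θ θ' : Θ) (x0 x0' : X0) (μ μ' : ProbabilityMeasure X) (g : U0 × Xi → ℝ),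
      (∀ a b : U0 × Xi, |g a - g b| ≤ dist a.1 b.1 + dist a.2 b.2) →
      |∫ a, g a ∂(pit θ x0 μ : Measure (U0 × Xi))
          - ∫ a, g a ∂(pit θ' x0' μ' : Measure (U0 × Xi))|
        ≤ Lpit * (dist θ θ' + dist x0 x0' + W1 μ μ'))
    (score : Θ → X0 → ProbabilityMeasure X → U0 × Xi → Θ)
    (hscoreB : ∀ θ x0 μ a, ‖score θ x0 μ a‖ ≤ Cs)
    (hscoreL : ∀ (θ θ' : Θ) (x0 x0' : X0) (μ μ' : ProbabilityMeasure X) (a a' : U0 × Xi),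
      ‖score θ x0 μ a - score θ' x0' μ' a'‖
        ≤ Ls * (dist θ θ' + dist x0 x0' + W1 μ μ' + dist a.1 a'.1 + dist a.2 a'.2))
    (μ0 : ProbabilityMeasure X) (x00 : X0)
    (TG : X0 → U0 → Xi → ProbabilityMeasure X → ProbabilityMeasure X)
    (hTG : ∀ (x0 : X0) (u0 : U0) (ξ : Xi) (μ : ProbabilityMeasure X),
      (TG x0 u0 ξ μ : Measure X) = (μ : Measure X).bind fun x =>
        ((Γ ξ x : Measure U)).bind fun u => (p x u x0 u0 μ : Measure X))
    (F : Set (X0 × U0 × ProbabilityMeasure X → ℝ))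
    (hF : ∀ f ∈ F, ∀ a b : X0 × U0 × ProbabilityMeasure X,
      |f a - f b| ≤ LF * (dist a.1 b.1 + dist a.2.1 b.2.1 + W1 a.2.2 b.2.2)) :
    ∀ t : ℕ, ∀ ε > (0 : ℝ), ∃ N0 : ℕ, ∀ N ≥ N0, ∀ θ : Θ, ∀ f ∈ F,
      |(∫ s, f (s.1, s.2.1.1, emp N s.2.2)
          ∂(pLawNFrom p p0 Γ pit θ N
            ((Measure.pi fun _ : Fin N => (μ0 : Measure X)).bind fun x =>
              ((pit θ x00 (emp N x) : Measure (U0 × Xi))).map fun a => (x00, a, x)) t))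
        - ∫ s, f (s.1, s.2.1.1, s.2.2)
          ∂(pLimLawFrom p0 pit TG θ
            (((pit θ x00 μ0 : Measure (U0 × Xi))).map fun a => (x00, a, μ0)) t)| ≤ ε := by
  have hW : ∀ μ ν : ProbabilityMeasure X, 0 ≤ W1 μ ν := aux_W_nonneg
  have hle : ∀ L d : ℝ, 0 ≤ d → L * d ≤ (|L| + 1) * d := fun L d hd =>
    mul_le_mul_of_nonneg_right (by linarith [le_abs_self L]) hd
  have hpos : ∀ L : ℝ, 0 < |L| + 1 := fun L => by positivity
  have main := aux_main (|Lp| + 1) (|Lp0| + 1) (|LPi| + 1) (|LΓ| + 1) (|Lpit| + 1)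
    (hpos _) (hpos _) (hpos _) (hpos _) (hpos _) p
    (fun x x' u u' x0 x0' u0 u0' μ μ' f hf => (hp x x' u u' x0 x0' u0 u0' μ μ' f hf).trans
      (hle _ _ (by have := hW μ μ'; positivity))) p0
    (fun x0 x0' u0 u0' μ μ' f hf => (hp0 x0 x0' u0 u0' μ μ' f hf).trans
      (hle _ _ (by have := hW μ μ'; positivity))) Γ
    (fun ξ x x' g hg => (hΓrule ξ x x' g hg).trans (hle _ _ dist_nonneg))
    (fun ξ ξ' x g hg => (hΓ ξ ξ' x g hg).trans (hle _ _ dist_nonneg)) pit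
    (fun θ x0 x0' μ μ' g hg => by
      have h1 := hpit θ θ x0 x0' μ μ' g hg
      rw [dist_self, zero_add] at h1
      exact h1.trans (hle _ _ (by have := hW μ μ'; positivity)))
    μ0 x00 TG hTG
  intro t ε hε
  obtain ⟨N0, hN0⟩ := (main t).2 (|LF| + 1) (hpos _) ε hε
  refine ⟨N0, fun N hN θ f hf => ?_⟩
  refine hN0 N hN θ (fun s => f (s.1, s.2.1.1, s.2.2)) fun a b => ?_
  refine (hF f hf _ _).trans ?_
  have h1 := hW a.2.2 b.2.2
  refine (hle _ _ (by positivity)).trans (mul_le_mul_of_nonneg_left ?_ (hpos LF).le)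
  have h2 := dist_nonneg (x := a.2.1.2) (y := b.2.1.2)
  simp only
  linarith
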